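/- (Inverse theorem for the Gowers-3 norm of quantum states.) There exist universal constants c > 0 and C ≥ 1 such that the following holds. For every n ≥ 1, every γ ∈ (0,1], and every amplitude vector f with characteristic distribution p, if 2ⁿ · ∑_{x ∈ 𝔽₂^{2n}} p(x)² ≥ γ (i.e., the eighth power of the Gowers-3 norm of the state is at least γ), then there exists a Lagrangian subspace L ⊆ 𝔽₂^{2n} such that ∑_{x ∈ L} p(x) ≥ c·γ^C. (The quantity ∑_{x ∈ L} p(x) is a lower bound on the squared fidelity of the state with some stabilizer state.) -/

import Mathlib

open Finset

/-- The characteristic distribution of an amplitude vector `f : 𝔽₂ⁿ → ℂ`. -/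
noncomputable def charDist (n : ℕ) (f : (Fin n → ZMod 2) → ℂ) :
    (Fin n → ZMod 2) × (Fin n → ZMod 2) → ℝ :=
  fun x =>
    ((2 : ℝ) ^ n)⁻¹ *
      ‖∑ y : Fin n → ZMod 2,
          f y * (starRingEnd ℂ) (f (y + x.1)) *
            (-1 : ℂ) ^ (∑ i, x.2 i * y i : ZMod 2).val‖ ^ 2

/-- The symplectic product on `𝔽₂^{2n}`: `[x,y] = ⟨x₁,y₂⟩ + ⟨x₂,y₁⟩`. -/
def sympl (n : ℕ) (x y : (Fin n → ZMod 2) × (Fin n → ZMod 2)) : ZMod 2 :=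
  (∑ i, x.1 i * y.2 i) + (∑ i, x.2 i * y.1 i)

/-- A Lagrangian subspace of `𝔽₂^{2n}`. -/
def IsLagrangian (n : ℕ)
    (L : Submodule (ZMod 2) ((Fin n → ZMod 2) × (Fin n → ZMod 2))) : Prop :=
  Module.finrank (ZMod 2) L = n ∧ ∀ x ∈ L, ∀ y ∈ L, sympl n x y = 0


set_option linter.unusedSectionVars false
set_option linter.unusedVariables false

section entropyBasics
open scoped Classical in
/-- law of a random variable -/
noncomputable def law {Ω α : Type} [Fintype Ω] (μ : Ω → ℝ) (X : Ω → α) (a : α) : ℝ :=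
  ∑ ω, if X ω = a then μ ω else 0

/-- entropy of a weight function -/
noncomputable def Hf {α : Type} [Fintype α] (p : α → ℝ) : ℝ := ∑ a, Real.negMulLog (p a)

/-- entropy of a random variable -/
noncomputable def HH {Ω α : Type} [Fintype Ω] [Fintype α] (μ : Ω → ℝ) (X : Ω → α) : ℝ :=
  Hf (law μ X)

/-- probability weights -/
def IsP {Ω : Type} [Fintype Ω] (μ : Ω → ℝ) : Prop := (∀ ω, 0 ≤ μ ω) ∧ ∑ ω, μ ω = 1

variable {Ω α β γ : Type} [Fintype Ω] [Fintype α] [Fintype β] [Fintype γ]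

lemma sum_law_mul (μ : Ω → ℝ) (X : Ω → α) (F : α → ℝ) :
    ∑ a, law μ X a * F a = ∑ ω, μ ω * F (X ω) := by
  classical
  simp only [law, Finset.sum_mul, ite_mul, zero_mul]
  rw [Finset.sum_comm]
  refine Finset.sum_congr rfl fun ω _ => ?_
  simp

lemma law_nonneg {μ : Ω → ℝ} (h : ∀ ω, 0 ≤ μ ω) (X : Ω → α) (a : α) : 0 ≤ law μ X a := by
  unfold law
  refine Finset.sum_nonneg fun ω _ => ?_
  split_ifs
  · exact h ω
  · exact le_rfl

lemma sum_law (μ : Ω → ℝ) (X : Ω → α) : ∑ a, law μ X a = ∑ ω, μ ω := by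
  simpa using sum_law_mul μ X (fun _ => 1)

lemma isP_law {μ : Ω → ℝ} (h : IsP μ) (X : Ω → α) : IsP (law μ X) :=
  ⟨law_nonneg h.1 X, by rw [sum_law, h.2]⟩

lemma law_comp (μ : Ω → ℝ) (X : Ω → α) (φ : α → β) :
    law (law μ X) φ = law μ (fun ω => φ (X ω)) := by
  classical
  funext b
  have := sum_law_mul μ X (fun a => if φ a = b then 1 else 0)
  simpa [law] using this

lemma le_law {μ : Ω → ℝ} (h : ∀ ω, 0 ≤ μ ω) (X : Ω → α) (ω : Ω) : μ ω ≤ law μ X (X ω) := by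
  classical
  unfold law
  have := Finset.single_le_sum (f := fun ω' => if X ω' = X ω then μ ω' else 0)
    (fun i _ => by split_ifs; exacts [h i, le_rfl]) (Finset.mem_univ ω)
  simpa using this

lemma law_le_law {μ : Ω → ℝ} (h : ∀ ω, 0 ≤ μ ω) (X : Ω → α) (Y : Ω → β) (ω : Ω)
    (hXY : ∀ ω', μ ω' ≠ 0 → X ω' = X ω → Y ω' = Y ω) : law μ X (X ω) ≤ law μ Y (Y ω) := by
  classical
  unfold law
  refine Finset.sum_le_sum fun ω' _ => ?_
  by_cases h0 : μ ω' = 0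
  · simp [h0]
  by_cases h1 : X ω' = X ω
  · simp [h1, hXY ω' h0 h1]
  · simp only [h1, if_false]
    split_ifs
    exacts [h ω', le_rfl]

lemma HH_eq (μ : Ω → ℝ) (X : Ω → α) :
    HH μ X = - ∑ ω, μ ω * Real.log (law μ X (X ω)) := by
  rw [← sum_law_mul μ X (fun a => Real.log (law μ X a))]
  simp [HH, Hf, Real.negMulLog]

lemma HH_mono {μ : Ω → ℝ} (h : ∀ ω, 0 ≤ μ ω) (X : Ω → α) (Y : Ω → β)
    (hXY : ∀ ω ω', μ ω ≠ 0 → μ ω' ≠ 0 → X ω' = X ω → Y ω' = Y ω) : HH μ Y ≤ HH μ X := by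
  rw [HH_eq, HH_eq, neg_le_neg_iff]
  refine Finset.sum_le_sum fun ω _ => ?_
  rcases (h ω).eq_or_lt with h0 | h0
  · simp [← h0]
  refine mul_le_mul_of_nonneg_left ?_ h0.le
  refine Real.log_le_log (h0.trans_le (le_law h X ω)) ?_
  exact law_le_law h X Y ω fun ω' h' => hXY ω ω' h0.ne' h'

lemma HH_congr {μ : Ω → ℝ} (h : ∀ ω, 0 ≤ μ ω) (X : Ω → α) (Y : Ω → β)
    (hXY : ∀ ω ω', μ ω ≠ 0 → μ ω' ≠ 0 → (X ω' = X ω ↔ Y ω' = Y ω)) : HH μ X = HH μ Y :=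
  le_antisymm (HH_mono h Y X fun a b c d => (hXY a b c d).2)
    (HH_mono h X Y fun a b c d => (hXY a b c d).1)

lemma law_fst (μ : Ω → ℝ) (X : Ω → α) (Y : Ω → β) (a : α) :
    ∑ b, law μ (fun ω => (X ω, Y ω)) (a, b) = law μ X a := by
  classical
  unfold law
  rw [Finset.sum_comm]
  refine Finset.sum_congr rfl fun ω _ => ?_
  by_cases h : X ω = a <;> simp [h]

lemma law_snd (μ : Ω → ℝ) (X : Ω → α) (Y : Ω → β) (b : β) :
    ∑ a, law μ (fun ω => (X ω, Y ω)) (a, b) = law μ Y b := by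
  classical
  unfold law
  rw [Finset.sum_comm]
  refine Finset.sum_congr rfl fun ω _ => ?_
  by_cases h : Y ω = b <;> simp [h]

lemma HH_condIndep {μ : Ω → ℝ} (h : ∀ ω, 0 ≤ μ ω) (X : Ω → α) (Y : Ω → β) (Z : Ω → γ)
    (hi : ∀ a b c, law μ (fun ω => (X ω, Y ω, Z ω)) (a, b, c) * law μ Z c =
      law μ (fun ω => (X ω, Z ω)) (a, c) * law μ (fun ω => (Y ω, Z ω)) (b, c)) :
    HH μ (fun ω => (X ω, Y ω, Z ω)) + HH μ Z =
      HH μ (fun ω => (X ω, Z ω)) + HH μ (fun ω => (Y ω, Z ω)) := by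
  simp only [HH_eq]
  rw [← neg_add, ← neg_add, ← Finset.sum_add_distrib, ← Finset.sum_add_distrib]
  congr 1
  refine Finset.sum_congr rfl fun ω _ => ?_
  rcases (h ω).eq_or_lt with h0 | h0
  · simp [← h0]
  have p1 := h0.trans_le (le_law h (fun ω => (X ω, Y ω, Z ω)) ω)
  have p2 := h0.trans_le (le_law h Z ω)
  have p3 := h0.trans_le (le_law h (fun ω => (X ω, Z ω)) ω)
  have p4 := h0.trans_le (le_law h (fun ω => (Y ω, Z ω)) ω)
  rw [← mul_add, ← mul_add, ← Real.log_mul p1.ne' p2.ne', ← Real.log_mul p3.ne' p4.ne', hi]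

lemma HH_indep {μ : Ω → ℝ} (h : ∀ ω, 0 ≤ μ ω) (X : Ω → α) (Y : Ω → β)
    (hi : ∀ a b, law μ (fun ω => (X ω, Y ω)) (a, b) = law μ X a * law μ Y b) :
    HH μ (fun ω => (X ω, Y ω)) = HH μ X + HH μ Y := by
  simp only [HH_eq]
  rw [← neg_add, ← Finset.sum_add_distrib]
  congr 1
  refine Finset.sum_congr rfl fun ω _ => ?_
  rcases (h ω).eq_or_lt with h0 | h0
  · simp [← h0]
  have p2 := h0.trans_le (le_law h X ω)
  have p3 := h0.trans_le (le_law h Y ω)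
  rw [← mul_add, ← Real.log_mul p2.ne' p3.ne', hi]

lemma HH_submod {μ : Ω → ℝ} (h : ∀ ω, 0 ≤ μ ω) (X : Ω → α) (Y : Ω → β) (Z : Ω → γ) :
    HH μ (fun ω => (X ω, Y ω, Z ω)) + HH μ Z ≤
      HH μ (fun ω => (X ω, Z ω)) + HH μ (fun ω => (Y ω, Z ω)) := by
  set F : α × β × γ → ℝ := fun t => law μ (fun ω => (X ω, Z ω)) (t.1, t.2.2) *
    law μ (fun ω => (Y ω, Z ω)) (t.2.1, t.2.2) /
    (law μ (fun ω => (X ω, Y ω, Z ω)) t * law μ Z t.2.2) with hF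
  have key : ∑ ω, μ ω * F (X ω, Y ω, Z ω) ≤ ∑ ω, μ ω := by
    rw [← sum_law_mul μ (fun ω => (X ω, Y ω, Z ω)) F, ← sum_law μ Z]
    calc ∑ t, law μ (fun ω => (X ω, Y ω, Z ω)) t * F t
        ≤ ∑ t : α × β × γ, law μ (fun ω => (X ω, Z ω)) (t.1, t.2.2) *
            law μ (fun ω => (Y ω, Z ω)) (t.2.1, t.2.2) / law μ Z t.2.2 := by
          refine Finset.sum_le_sum fun t _ => ?_
          have n1 := law_nonneg h (fun ω => (X ω, Y ω, Z ω)) t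
          have n2 := law_nonneg h (fun ω => (X ω, Z ω)) (t.1, t.2.2)
          have n3 := law_nonneg h (fun ω => (Y ω, Z ω)) (t.2.1, t.2.2)
          have n4 := law_nonneg h Z t.2.2
          rcases n1.eq_or_lt with h0 | h0
          · rw [← h0, zero_mul]; positivity
          · rw [hF]; dsimp only
            rw [← mul_div_assoc, mul_div_mul_left _ _ h0.ne']
      _ = ∑ c, ∑ a, ∑ b, law μ (fun ω => (X ω, Z ω)) (a, c) *
            law μ (fun ω => (Y ω, Z ω)) (b, c) / law μ Z c := by
          simp only [Fintype.sum_prod_type]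
          have : ∀ a, ∑ b, ∑ c, law μ (fun ω => (X ω, Z ω)) (a, c) *
            law μ (fun ω => (Y ω, Z ω)) (b, c) / law μ Z c = ∑ c, ∑ b, law μ (fun ω => (X ω, Z ω)) (a, c) *
            law μ (fun ω => (Y ω, Z ω)) (b, c) / law μ Z c := fun a => Finset.sum_comm
          simp only [this]
          rw [Finset.sum_comm]
      _ ≤ ∑ c, law μ Z c := by
          refine Finset.sum_le_sum fun c _ => ?_
          simp only [← Finset.sum_div, ← Finset.mul_sum, law_snd, ← Finset.sum_mul]
          exact mul_self_div_self _ |>.le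
  simp only [HH_eq]
  rw [← neg_add, ← neg_add, neg_le_neg_iff, ← Finset.sum_add_distrib, ← Finset.sum_add_distrib,
    ← sub_nonpos, ← Finset.sum_sub_distrib]
  refine le_trans (b := ∑ ω, (μ ω * F (X ω, Y ω, Z ω) - μ ω)) ?_ ?_
  · refine Finset.sum_le_sum fun ω _ => ?_
    rcases (h ω).eq_or_lt with h0 | h0
    · simp [← h0]
    have p1 := h0.trans_le (le_law h (fun ω => (X ω, Y ω, Z ω)) ω)
    have p2 := h0.trans_le (le_law h Z ω)
    have p3 := h0.trans_le (le_law h (fun ω => (X ω, Z ω)) ω)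
    have p4 := h0.trans_le (le_law h (fun ω => (Y ω, Z ω)) ω)
    rw [← mul_add, ← mul_add, ← Real.log_mul p1.ne' p2.ne', ← Real.log_mul p3.ne' p4.ne',
      ← mul_sub, ← Real.log_div (by positivity) (by positivity)]
    have := Real.log_le_sub_one_of_pos (x := F (X ω, Y ω, Z ω)) (by rw [hF]; dsimp only; positivity)
    calc _ ≤ μ ω * (F (X ω, Y ω, Z ω) - 1) := mul_le_mul_of_nonneg_left this h0.le
      _ = _ := by ring
  · rw [Finset.sum_sub_distrib]; linarith

lemma HH_const {μ : Ω → ℝ} (h : IsP μ) (Z : Ω → γ) (hZ : ∀ ω ω', Z ω = Z ω') : HH μ Z = 0 := by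
  rw [HH_eq, neg_eq_zero]
  refine Finset.sum_eq_zero fun ω _ => ?_
  have : law μ Z (Z ω) = 1 := by
    unfold law; rw [← h.2]
    refine Finset.sum_congr rfl fun ω' _ => ?_
    simp [hZ ω' ω]
  simp [this]

lemma HH_subadd {μ : Ω → ℝ} (h : IsP μ) (X : Ω → α) (Y : Ω → β) :
    HH μ (fun ω => (X ω, Y ω)) ≤ HH μ X + HH μ Y := by
  have h1 := HH_submod h.1 X Y (fun _ => ())
  have h2 := HH_const h (fun _ => ()) (by simp)
  have h3 := HH_congr h.1 (fun ω => (X ω, Y ω, ())) (fun ω => (X ω, Y ω)) (by simp)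
  have h4 := HH_congr h.1 (fun ω => (X ω, ())) X (by simp)
  have h5 := HH_congr h.1 (fun ω => (Y ω, ())) Y (by simp)
  linarith

lemma HH_le_log {μ : Ω → ℝ} (h : IsP μ) (X : Ω → α) (A : Finset α) (hA : ∀ ω, μ ω ≠ 0 → X ω ∈ A) :
    HH μ X ≤ Real.log A.card := by
  have hne : (0:ℝ) < A.card := by
    have : ∃ ω, μ ω ≠ 0 := by
      by_contra hc
      push Not at hc
      have := h.2
      simp [hc] at this
    obtain ⟨ω, hω⟩ := this
    exact_mod_cast Finset.card_pos.2 ⟨_, hA ω hω⟩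
  have hz : ∀ a, a ∉ A → law μ X a = 0 := by
    intro a ha
    unfold law
    refine Finset.sum_eq_zero fun ω _ => ?_
    by_cases h0 : μ ω = 0
    · simp [h0]
    · have := hA ω h0
      rw [if_neg]; rintro rfl; exact ha this
  have hs : ∑ a ∈ A, law μ X a = 1 := by
    rw [← h.2, ← sum_law μ X]
    exact Finset.sum_subset (Finset.subset_univ _) fun a _ ha => hz a ha
  have e1 : HH μ X = ∑ a ∈ A, Real.negMulLog (law μ X a) := by
    unfold HH Hf
    symm
    exact Finset.sum_subset (Finset.subset_univ _) fun a _ ha => by simp [hz a ha]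
  rw [e1]
  have : ∀ a ∈ A, Real.negMulLog (law μ X a) ≤ law μ X a * Real.log A.card + ((A.card:ℝ)⁻¹ - law μ X a) := by
    intro a _
    rcases (law_nonneg h.1 X a).eq_or_lt with h0 | h0
    · rw [← h0]; simp
    have := Real.log_le_sub_one_of_pos (x := (A.card:ℝ)⁻¹ / law μ X a) (by positivity)
    rw [Real.log_div (by positivity) h0.ne', Real.log_inv] at this
    have h2 := mul_le_mul_of_nonneg_left this h0.le
    have h3 : law μ X a * ((A.card:ℝ)⁻¹ / law μ X a - 1) = (A.card:ℝ)⁻¹ - law μ X a := by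
      field_simp
    rw [h3] at h2
    unfold Real.negMulLog
    linarith
  refine (Finset.sum_le_sum this).trans ?_
  rw [Finset.sum_add_distrib, ← Finset.sum_mul, hs, Finset.sum_sub_distrib, hs]
  simp [hne.ne']

lemma Hf_nonneg {p : α → ℝ} (h : IsP p) : 0 ≤ Hf p := by
  refine Finset.sum_nonneg fun a _ => Real.negMulLog_nonneg (h.1 a) ?_
  rw [← h.2]
  exact Finset.single_le_sum (fun i _ => h.1 i) (Finset.mem_univ a)

/-- concavity of entropy for mixtures -/
lemma Hf_concave {ι : Type} [Fintype ι] {w : ι → ℝ} (hw : IsP w) (q : ι → α → ℝ) (hq : ∀ i a, 0 ≤ q i a) :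
    ∑ i, w i * Hf (q i) ≤ Hf (fun a => ∑ i, w i * q i a) := by
  unfold Hf
  simp only [Finset.mul_sum]
  rw [Finset.sum_comm]
  refine Finset.sum_le_sum fun a _ => ?_
  have := Real.concaveOn_negMulLog.le_map_sum (t := Finset.univ) (w := w) (p := fun i => q i a)
    (fun i _ => hw.1 i) hw.2 (fun i _ => hq i a)
  simpa using this

end entropyBasics

section indepPart
variable {Ω α β γ δ : Type} [Fintype Ω] [Fintype α] [Fintype β] [Fintype γ] [Fintype δ]

lemma law_inj (μ : Ω → ℝ) (X : Ω → α) (e : α → β) (he : Function.Injective e) (a : α) :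
    law μ (fun ω => e (X ω)) (e a) = law μ X a := by
  classical
  unfold law
  exact Finset.sum_congr rfl fun ω _ => if_congr he.eq_iff rfl rfl

/-- independence of two random variables -/
def IndepR (μ : Ω → ℝ) (X : Ω → α) (Y : Ω → β) : Prop :=
  ∀ a b, law μ (fun ω => (X ω, Y ω)) (a, b) = law μ X a * law μ Y b

lemma IndepR.comp {μ : Ω → ℝ} {X : Ω → α} {Y : Ω → β} (h : IndepR μ X Y) (φ : α → γ) (ψ : β → δ) :
    IndepR μ (fun ω => φ (X ω)) (fun ω => ψ (Y ω)) := by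
  classical
  intro c d
  have e1 := congrFun (law_comp μ (fun ω => (X ω, Y ω)) (fun t => (φ t.1, ψ t.2))) (c, d)
  dsimp only at e1
  rw [← e1, ← law_comp μ X φ, ← law_comp μ Y ψ]
  rw [law, law, law, Fintype.sum_prod_type, Finset.sum_mul_sum]
  refine Finset.sum_congr rfl fun a _ => Finset.sum_congr rfl fun b _ => ?_
  have := h a b
  by_cases h1 : φ a = c <;> by_cases h2 : ψ b = d <;> simp [h1, h2, this]

/-- independence of four random variables -/
def Ind4 (μ : Ω → ℝ) (X : Ω → α) (Y : Ω → β) (Z : Ω → γ) (W : Ω → δ) : Prop :=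
  ∀ a b c d, law μ (fun ω => (X ω, Y ω, Z ω, W ω)) (a, b, c, d) =
    law μ X a * law μ Y b * law μ Z c * law μ W d

lemma Ind4.pair {μ : Ω → ℝ} (hμ : IsP μ) {X : Ω → α} {Y : Ω → β} {Z : Ω → γ} {W : Ω → δ}
    (h : Ind4 μ X Y Z W) :
    IndepR μ X Y ∧ IndepR μ Z W ∧ IndepR μ (fun ω => (X ω, Y ω)) (fun ω => (Z ω, W ω)) := by
  have base : ∀ a b c d, law μ (fun ω => ((X ω, Y ω), (Z ω, W ω))) ((a, b), (c, d)) =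
    law μ X a * law μ Y b * law μ Z c * law μ W d := by
    intro a b c d
    rw [← h a b c d]
    exact law_inj μ (fun ω => (X ω, Y ω, Z ω, W ω)) (fun t => ((t.1, t.2.1), (t.2.2.1, t.2.2.2)))
      (by rintro ⟨a, b, c, d⟩ ⟨a', b', c', d'⟩; simp; tauto) (a, b, c, d)
  have s1 : ∀ {κ : Type} [Fintype κ] (V : Ω → κ), ∑ a, law μ V a = 1 := fun V => by
    rw [sum_law, hμ.2]
  have i1 : IndepR μ X Y := by
    intro a b
    rw [← law_fst μ (fun ω => (X ω, Y ω)) (fun ω => (Z ω, W ω)) (a, b), Fintype.sum_prod_type]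
    simp only [base, ← Finset.mul_sum, s1, mul_one]
  have i2 : IndepR μ Z W := by
    intro c d
    rw [← law_snd μ (fun ω => (X ω, Y ω)) (fun ω => (Z ω, W ω)) (c, d), Fintype.sum_prod_type]
    simp only [base, ← Finset.mul_sum, ← Finset.sum_mul, s1, mul_one, one_mul]
  refine ⟨i1, i2, ?_⟩
  rintro ⟨a, b⟩ ⟨c, d⟩
  rw [base, i1 a b, i2 c d]; ring

lemma Ind4.p1324 {μ : Ω → ℝ} {X : Ω → α} {Y : Ω → β} {Z : Ω → γ} {W : Ω → δ}
    (h : Ind4 μ X Y Z W) : Ind4 μ X Z Y W := by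
  intro a c b d
  have := law_inj μ (fun ω => (X ω, Y ω, Z ω, W ω)) (fun t => (t.1, t.2.2.1, t.2.1, t.2.2.2))
      (by rintro ⟨a, b, c, d⟩ ⟨a', b', c', d'⟩; simp; tauto) (a, b, c, d)
  dsimp only at this
  rw [this, h a b c d]; ring

lemma Ind4.p2134 {μ : Ω → ℝ} {X : Ω → α} {Y : Ω → β} {Z : Ω → γ} {W : Ω → δ}
    (h : Ind4 μ X Y Z W) : Ind4 μ Y X Z W := by
  intro b a c d
  have := law_inj μ (fun ω => (X ω, Y ω, Z ω, W ω)) (fun t => (t.2.1, t.1, t.2.2.1, t.2.2.2))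
      (by rintro ⟨a, b, c, d⟩ ⟨a', b', c', d'⟩; simp; tauto) (a, b, c, d)
  dsimp only at this
  rw [this, h a b c d]; ring

lemma Ind4.p1243 {μ : Ω → ℝ} {X : Ω → α} {Y : Ω → β} {Z : Ω → γ} {W : Ω → δ}
    (h : Ind4 μ X Y Z W) : Ind4 μ X Y W Z := by
  intro a b d c
  have := law_inj μ (fun ω => (X ω, Y ω, Z ω, W ω)) (fun t => (t.1, t.2.1, t.2.2.2, t.2.2.1))
      (by rintro ⟨a, b, c, d⟩ ⟨a', b', c', d'⟩; simp; tauto) (a, b, c, d)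
  dsimp only at this
  rw [this, h a b c d]; ring

/-- existence of four independent variables with given laws -/
lemma exists_ind4 {p : α → ℝ} {q : β → ℝ} {r : γ → ℝ} {s : δ → ℝ} (hp : IsP p) (hq : IsP q)
    (hr : IsP r) (hs : IsP s) : ∃ μ : α × β × γ × δ → ℝ, IsP μ ∧
      Ind4 μ (fun t => t.1) (fun t => t.2.1) (fun t => t.2.2.1) (fun t => t.2.2.2) ∧
      law μ (fun t => t.1) = p ∧ law μ (fun t => t.2.1) = q ∧ law μ (fun t => t.2.2.1) = r ∧
      law μ (fun t => t.2.2.2) = s := by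
  classical
  set μ : α × β × γ × δ → ℝ := fun t => p t.1 * q t.2.1 * r t.2.2.1 * s t.2.2.2 with hμ
  have l0 : ∀ t, law μ (fun t => (t.1, t.2.1, t.2.2.1, t.2.2.2)) t = μ t := by
    intro t
    unfold law
    have : ∀ ω : α × β × γ × δ, ((ω.1, ω.2.1, ω.2.2.1, ω.2.2.2) = t) ↔ ω = t := fun ω => Iff.rfl
    simp
  have l1 : law μ (fun t => t.1) = p := by
    funext a
    rw [← law_fst μ (fun t => t.1) (fun t => t.2) a]
    simp only [Fintype.sum_prod_type]
    have : ∀ b c d, law μ (fun ω => (ω.1, ω.2)) (a, b, c, d) = p a * q b * r c * s d :=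
      fun b c d => l0 (a, b, c, d)
    simp only [this, ← Finset.mul_sum, hq.2, hr.2, hs.2, mul_one]
  have l2 : law μ (fun t => t.2.1) = q := by
    funext b
    rw [← law_snd μ (fun t => t.1) (fun t => t.2.1) b]
    have : ∀ a, law μ (fun ω => (ω.1, ω.2.1)) (a, b) = p a * q b := by
      intro a
      rw [← law_fst μ (fun ω => (ω.1, ω.2.1)) (fun ω => ω.2.2) (a, b)]
      simp only [Fintype.sum_prod_type]
      have : ∀ c d, law μ (fun ω => ((ω.1, ω.2.1), ω.2.2)) ((a, b), c, d) = p a * q b * r c * s d := by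
        intro c d
        rw [← show μ (a, b, c, d) = p a * q b * r c * s d from rfl, ← l0]
        exact law_inj μ (fun ω => (ω.1, ω.2.1, ω.2.2.1, ω.2.2.2)) (fun t => ((t.1, t.2.1), t.2.2))
          (by rintro ⟨a, b, c, d⟩ ⟨a', b', c', d'⟩; simp; tauto) (a, b, c, d)
      simp only [this, ← Finset.mul_sum, hr.2, hs.2, mul_one]
    simp only [this, ← Finset.sum_mul, hp.2, one_mul]
  have l3 : law μ (fun t => t.2.2.1) = r := by
    funext c
    rw [← law_snd μ (fun t => (t.1, t.2.1)) (fun t => t.2.2.1) c]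
    have : ∀ a b, law μ (fun ω => ((ω.1, ω.2.1), ω.2.2.1)) ((a, b), c) = p a * q b * r c := by
      intro a b
      rw [← law_fst μ (fun ω => ((ω.1, ω.2.1), ω.2.2.1)) (fun ω => ω.2.2.2) ((a, b), c)]
      have : ∀ d, law μ (fun ω => (((ω.1, ω.2.1), ω.2.2.1), ω.2.2.2)) (((a, b), c), d) = p a * q b * r c * s d := by
        intro d
        rw [← show μ (a, b, c, d) = p a * q b * r c * s d from rfl, ← l0]
        exact law_inj μ (fun ω => (ω.1, ω.2.1, ω.2.2.1, ω.2.2.2)) (fun t => (((t.1, t.2.1), t.2.2.1), t.2.2.2))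
          (by rintro ⟨a, b, c, d⟩ ⟨a', b', c', d'⟩; simp; tauto) (a, b, c, d)
      simp only [this, ← Finset.mul_sum, hs.2, mul_one]
    simp only [Fintype.sum_prod_type, this, ← Finset.sum_mul, ← Finset.mul_sum, hp.2, hq.2, one_mul]
  have l4 : law μ (fun t => t.2.2.2) = s := by
    funext d
    rw [← law_snd μ (fun t => (t.1, t.2.1, t.2.2.1)) (fun t => t.2.2.2) d]
    have : ∀ a b c, law μ (fun ω => ((ω.1, ω.2.1, ω.2.2.1), ω.2.2.2)) ((a, b, c), d) = p a * q b * r c * s d := by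
        intro a b c
        rw [← show μ (a, b, c, d) = p a * q b * r c * s d from rfl, ← l0]
        exact law_inj μ (fun ω => (ω.1, ω.2.1, ω.2.2.1, ω.2.2.2)) (fun t => ((t.1, t.2.1, t.2.2.1), t.2.2.2))
          (by rintro ⟨a, b, c, d⟩ ⟨a', b', c', d'⟩; simp; tauto) (a, b, c, d)
    simp only [Fintype.sum_prod_type, this, ← Finset.sum_mul, ← Finset.mul_sum, hp.2, hq.2, hr.2, one_mul, mul_one]
  refine ⟨μ, ⟨fun t => ?_, ?_⟩, ?_, l1, l2, l3, l4⟩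
  · have := hp.1 t.1; have := hq.1 t.2.1; have := hr.1 t.2.2.1; have := hs.1 t.2.2.2
    simp only [hμ]; positivity
  · simp only [hμ, Fintype.sum_prod_type, ← Finset.mul_sum, hq.2, hr.2, hs.2, mul_one, hp.2]
  · intro a b c d
    rw [l1, l2, l3, l4]; exact l0 (a, b, c, d)

end indepPart

section convPart
variable {G : Type} [AddCommGroup G] [Module (ZMod 2) G] [Fintype G]
variable {Ω α β γ δ : Type} [Fintype Ω] [Fintype α] [Fintype β] [Fintype γ] [Fintype δ]

lemma g2_self (a : G) : a + a = 0 := ZModModule.add_self a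
lemma g2_cancel (a b : G) : a + (a + b) = b := by rw [← add_assoc, g2_self, zero_add]
lemma g2_cancel' (a b : G) : a + b + b = a := by rw [add_assoc, g2_self, add_zero]
lemma g2_iff (a b c : G) : a + b = c ↔ b = c + a := by
  constructor
  · rintro rfl; rw [add_comm a b, g2_cancel']
  · rintro rfl; rw [add_comm, g2_cancel']

noncomputable def conv (p q : G → ℝ) (g : G) : ℝ := ∑ h, p h * q (g + h)

lemma conv_comm (p q : G → ℝ) : conv p q = conv q p := by
  funext g
  unfold conv
  refine Fintype.sum_equiv (Equiv.addLeft g) _ _ fun h => ?_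
  simp [g2_cancel, mul_comm]

lemma isP_conv {p q : G → ℝ} (hp : IsP p) (hq : IsP q) : IsP (conv p q) := by
  refine ⟨fun g => Finset.sum_nonneg fun h _ => mul_nonneg (hp.1 _) (hq.1 _), ?_⟩
  unfold conv
  rw [Finset.sum_comm, ← hp.2]
  refine Finset.sum_congr rfl fun h _ => ?_
  rw [← Finset.mul_sum, Fintype.sum_equiv (Equiv.addRight h) (fun g => q (g + h)) q (fun g => by simp),
    hq.2, mul_one]

lemma law_add {μ : Ω → ℝ} {X Y : Ω → G} (h : IndepR μ X Y) :
    law μ (fun ω => X ω + Y ω) = conv (law μ X) (law μ Y) := by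
  classical
  funext g
  have e1 := congrFun (law_comp μ (fun ω => (X ω, Y ω)) (fun t => t.1 + t.2)) g
  dsimp only at e1
  rw [← e1, law, Fintype.sum_prod_type, conv]
  refine Finset.sum_congr rfl fun a _ => ?_
  simp only [g2_iff, Finset.sum_ite_eq', Finset.mem_univ, if_true, h a]

lemma Hf_le_conv_right {p q : G → ℝ} (hp : IsP p) (hq : IsP q) : Hf q ≤ Hf (conv p q) := by
  have := Hf_concave hp (fun h g => q (g + h)) (fun _ _ => hq.1 _)
  have e : ∀ h : G, Hf (fun g => q (g + h)) = Hf q := fun h => by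
    unfold Hf
    exact Fintype.sum_equiv (Equiv.addRight h) _ _ (fun g => by simp)
  simp only [e, ← Finset.sum_mul, hp.2, one_mul] at this
  exact this

lemma Hf_le_conv_left {p q : G → ℝ} (hp : IsP p) (hq : IsP q) : Hf p ≤ Hf (conv p q) := by
  rw [conv_comm]; exact Hf_le_conv_right hq hp

lemma HH_pairsum {μ : Ω → ℝ} (hμ : IsP μ) {X Y Z W : Ω → G} (h : Ind4 μ X Y Z W) :
    HH μ (fun ω => (X ω + Y ω, Z ω + W ω)) =
      Hf (conv (law μ X) (law μ Y)) + Hf (conv (law μ Z) (law μ W)) := by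
  obtain ⟨i1, i2, i3⟩ := h.pair hμ
  have := HH_indep hμ.1 (fun ω => X ω + Y ω) (fun ω => Z ω + W ω)
    (i3.comp (fun t => t.1 + t.2) (fun t => t.1 + t.2))
  rw [this, HH, HH, law_add i1, law_add i2]

/-- Kaimanovich-Vershik -/
lemma Hf_KV {p q r : G → ℝ} (hp : IsP p) (hq : IsP q) (hr : IsP r) :
    Hf (conv (conv p q) r) + Hf q ≤ Hf (conv p q) + Hf (conv q r) := by
  have hu : IsP (fun _ : Unit => (1:ℝ)) := ⟨fun _ => zero_le_one, by simp⟩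
  obtain ⟨μ, hμ, h4, l1, l2, l3, l4⟩ := exists_ind4 hp hq hr hu
  set X : G × G × G × Unit → G := fun t => t.1
  set Y : G × G × G × Unit → G := fun t => t.2.1
  set Z : G × G × G × Unit → G := fun t => t.2.2.1
  set W : G × G × G × Unit → Unit := fun t => t.2.2.2
  have sub := HH_submod hμ.1 X Z (fun ω => X ω + Y ω + Z ω)
  obtain ⟨i1, i2, i3⟩ := h4.pair hμ
  have j1 : IndepR μ (fun ω => X ω + Y ω) Z := i3.comp (fun t => t.1 + t.2) (fun t => t.1)
  have j2 : IndepR μ (fun ω => (X ω, Y ω)) Z := i3.comp id (fun t => t.1)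
  -- X indep of (Y, Z)
  obtain ⟨k1, k2, k3⟩ := (h4.p1243.p1324).pair hμ
  have m1 : IndepR μ X (fun ω => Y ω + Z ω) := k3.comp (fun t => t.1) (fun t => t.1 + t.2)
  have e1 : HH μ (fun ω => X ω + Y ω + Z ω) = Hf (conv (conv p q) r) := by
    rw [HH, law_add j1, law_add i1, l1, l2, l3]
  have e2 : HH μ (fun ω => (X ω, X ω + Y ω + Z ω)) = Hf p + Hf (conv q r) := by
    rw [HH_congr hμ.1 _ (fun ω => (X ω, Y ω + Z ω)), HH_indep hμ.1 _ _ m1, HH, HH, law_add k2, l1, l2, l3]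
    intro ω ω' _ _
    simp only [Prod.mk.injEq]
    constructor
    · rintro ⟨h1, h2⟩; rw [h1, add_assoc, add_assoc] at h2; exact ⟨h1, add_left_cancel h2⟩
    · rintro ⟨h1, h2⟩; rw [add_assoc, add_assoc, h1, h2]; simp
  have e3 : HH μ (fun ω => (Z ω, X ω + Y ω + Z ω)) = Hf r + Hf (conv p q) := by
    rw [HH_congr hμ.1 _ (fun ω => (X ω + Y ω, Z ω)), HH_indep hμ.1 _ _ j1, HH, HH, law_add i1, l1, l2, l3,
      add_comm]
    intro ω ω' _ _
    simp only [Prod.mk.injEq]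
    constructor
    · rintro ⟨h1, h2⟩; rw [h1] at h2; exact ⟨add_right_cancel h2, h1⟩
    · rintro ⟨h1, h2⟩; rw [h1, h2]; simp
  have e4 : HH μ (fun ω => (X ω, Z ω, X ω + Y ω + Z ω)) = Hf p + Hf q + Hf r := by
    rw [HH_congr hμ.1 _ (fun ω => ((X ω, Y ω), Z ω)), HH_indep hμ.1 _ _ j2, HH_indep hμ.1 _ _ i1,
      HH, HH, HH, l1, l2, l3]
    intro ω ω' _ _
    simp only [Prod.mk.injEq]
    constructor
    · rintro ⟨h1, h2, h3⟩; rw [h1, h2] at h3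
      exact ⟨⟨h1, add_left_cancel (add_right_cancel h3)⟩, h2⟩
    · rintro ⟨⟨h1, h2⟩, h3⟩; rw [h1, h2, h3]; simp
  linarith

/-- entropic Ruzsa distance -/
noncomputable def DD (p q : G → ℝ) : ℝ := Hf (conv p q) - Hf p / 2 - Hf q / 2

/-- the functional to be minimised -/
noncomputable def tau (η : ℝ) (p0 p q : G → ℝ) : ℝ := DD p q + η * DD p0 p + η * DD p0 q

lemma Hf_triangle {p q r : G → ℝ} (hp : IsP p) (hq : IsP q) (hr : IsP r) :
    Hf (conv p r) + Hf q ≤ Hf (conv p q) + Hf (conv q r) := by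
  have hu : IsP (fun _ : Unit => (1:ℝ)) := ⟨fun _ => zero_le_one, by simp⟩
  have h1 := Hf_KV hp hq hr
  have h2 : Hf (conv p r) ≤ Hf (conv (conv p q) r) := by
    have assoc : conv (conv p q) r = conv q (conv p r) := by
      funext g
      simp only [conv, Finset.sum_mul, Finset.mul_sum]
      rw [Finset.sum_comm]
      rw [Finset.sum_comm]
      have : ∀ y : G, ∑ i, p i * q (y + i) * r (g + y) = ∑ i, q i * (p (y + i) * r (g + y)) := by
        intro y
        refine Fintype.sum_equiv (Equiv.addLeft y) _ _ fun h => ?_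
        simp [g2_cancel]; ring
      simp only [this]
      rw [Finset.sum_comm]
      refine Finset.sum_congr rfl fun i _ => ?_
      refine Fintype.sum_equiv (Equiv.addRight i) _ _ fun h => ?_
      simp only [Equiv.coe_addRight]
      have : g + i + (h + i) = g + h := by
        rw [add_add_add_comm, g2_self, add_zero]
      rw [this]
    rw [assoc]
    exact Hf_le_conv_right hq (isP_conv hp hr)
  linarith

lemma condHf {μ : Ω → ℝ} (hμ : IsP μ) (X : Ω → α) (T : Ω → β) :
    ∑ t, law μ T t * Hf (fun g => law μ (fun ω => (X ω, T ω)) (g, t) / law μ T t) =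
      HH μ (fun ω => (X ω, T ω)) - HH μ T := by
  unfold HH Hf
  rw [Fintype.sum_prod_type, Finset.sum_comm, ← Finset.sum_sub_distrib]
  refine Finset.sum_congr rfl fun t _ => ?_
  have hs := law_snd μ X T t
  have hn := fun g => law_nonneg hμ.1 (fun ω => (X ω, T ω)) (g, t)
  by_cases h0 : law μ T t = 0
  · rw [h0] at hs
    have := (Finset.sum_eq_zero_iff_of_nonneg (fun g _ => hn g)).1 hs
    simp [h0, fun g => this g (Finset.mem_univ g)]
  · rw [Finset.mul_sum]
    have : ∀ g, law μ T t * Real.negMulLog (law μ (fun ω => (X ω, T ω)) (g, t) / law μ T t) =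
      Real.negMulLog (law μ (fun ω => (X ω, T ω)) (g, t)) + law μ (fun ω => (X ω, T ω)) (g, t) * Real.log (law μ T t) := by
      intro g
      by_cases h1 : law μ (fun ω => (X ω, T ω)) (g, t) = 0
      · simp [h1]
      · unfold Real.negMulLog
        rw [Real.log_div h1 h0]
        field_simp
        ring
    simp only [this, Finset.sum_add_distrib, ← Finset.sum_mul, hs]
    unfold Real.negMulLog; ring

lemma cond_isP {μ : Ω → ℝ} (hμ : IsP μ) (X : Ω → α) (T : Ω → β) (t : β) (h0 : law μ T t ≠ 0) :
    IsP (fun g => law μ (fun ω => (X ω, T ω)) (g, t) / law μ T t) := by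
  refine ⟨fun g => div_nonneg (law_nonneg hμ.1 _ _) (law_nonneg hμ.1 _ _), ?_⟩
  rw [← Finset.sum_div, law_snd, div_self h0]

/-- minimality for conditioned random variables -/
lemma condMin {η : ℝ} (hη : 0 ≤ η) {p0 p1 p2 : G → ℝ} (hp0 : IsP p0)
    (hm : ∀ p q, IsP p → IsP q → tau η p0 p1 p2 ≤ tau η p0 p q)
    {μ : Ω → ℝ} (hμ : IsP μ) (X Y : Ω → G) (T : Ω → β)
    (hi : ∀ a b c, law μ (fun ω => (X ω, Y ω, T ω)) (a, b, c) * law μ T c =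
      law μ (fun ω => (X ω, T ω)) (a, c) * law μ (fun ω => (Y ω, T ω)) (b, c)) :
    tau η p0 p1 p2 ≤ (HH μ (fun ω => (X ω + Y ω, T ω)) - HH μ T)
      - (HH μ (fun ω => (X ω, T ω)) - HH μ T) / 2 - (HH μ (fun ω => (Y ω, T ω)) - HH μ T) / 2
      + η * (Hf (conv p0 (law μ X)) - Hf p0 / 2 - (HH μ (fun ω => (X ω, T ω)) - HH μ T) / 2)
      + η * (Hf (conv p0 (law μ Y)) - Hf p0 / 2 - (HH μ (fun ω => (Y ω, T ω)) - HH μ T) / 2) := by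
  classical
  set pt : β → G → ℝ := fun t g => law μ (fun ω => (X ω, T ω)) (g, t) / law μ T t with hpt
  set qt : β → G → ℝ := fun t g => law μ (fun ω => (Y ω, T ω)) (g, t) / law μ T t with hqt
  have hT := isP_law hμ T
  have cX := condHf hμ X T
  have cY := condHf hμ Y T
  have cXY := condHf hμ (fun ω => X ω + Y ω) T
  have step : ∀ t, law μ T t * tau η p0 p1 p2 ≤ law μ T t * tau η p0 (pt t) (qt t) := by
    intro t
    by_cases h0 : law μ T t = 0
    · simp [h0]
    · exact mul_le_mul_of_nonneg_left (hm _ _ (cond_isP hμ X T t h0) (cond_isP hμ Y T t h0)) (hT.1 t)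
  have step2 := Finset.sum_le_sum (fun t (_ : t ∈ Finset.univ) => step t)
  rw [← Finset.sum_mul, hT.2, one_mul] at step2
  have conc : ∀ (Z : Ω → G), ∑ t, law μ T t * Hf (conv p0 (fun g => law μ (fun ω => (Z ω, T ω)) (g, t) / law μ T t))
      ≤ Hf (conv p0 (law μ Z)) := by
    intro Z
    refine (Hf_concave hT _ ?_).trans (le_of_eq ?_)
    · intro t g
      exact Finset.sum_nonneg fun h _ => mul_nonneg (hp0.1 _) (div_nonneg (law_nonneg hμ.1 _ _) (law_nonneg hμ.1 _ _))
    · congr 1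
      funext g
      simp only [conv, Finset.mul_sum]
      rw [Finset.sum_comm]
      refine Finset.sum_congr rfl fun h _ => ?_
      rw [← law_fst μ Z T, Finset.mul_sum]
      refine Finset.sum_congr rfl fun t _ => ?_
      by_cases h0 : law μ T t = 0
      · have hs := law_snd μ Z T t
        rw [h0] at hs
        have := (Finset.sum_eq_zero_iff_of_nonneg (fun g _ => law_nonneg hμ.1 (fun ω => (Z ω, T ω)) (g, t))).1 hs
        simp [h0, fun g => this g (Finset.mem_univ g)]
      · field_simp
  have cc : ∀ t, law μ T t * Hf (conv (pt t) (qt t)) =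
      law μ T t * Hf (fun g => law μ (fun ω => (X ω + Y ω, T ω)) (g, t) / law μ T t) := by
    intro t
    by_cases h0 : law μ T t = 0
    · simp [h0]
    congr 2
    funext g
    have e1 := congrFun (law_comp μ (fun ω => (X ω, Y ω, T ω)) (fun s => (s.1 + s.2.1, s.2.2))) (g, t)
    dsimp only at e1
    rw [← e1, law]
    simp only [Fintype.sum_prod_type, Prod.mk.injEq]
    rw [conv, Finset.sum_div]
    refine Finset.sum_congr rfl fun a _ => ?_
    have : ∀ b c, (if a + b = g ∧ c = t then law μ (fun ω => (X ω, Y ω, T ω)) (a, b, c) else 0) =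
      if b = g + a then (if c = t then law μ (fun ω => (X ω, Y ω, T ω)) (a, b, c) else 0) else 0 := by
      intro b c
      rw [g2_iff]
      by_cases h1 : b = g + a <;> by_cases h2 : c = t <;> simp [h1, h2]
    simp only [this]
    rw [Finset.sum_eq_single (g + a)]
    · simp only [if_true, Finset.sum_ite_eq', Finset.mem_univ]
      have := hi a (g + a) t
      simp only [hpt, hqt]
      rw [div_mul_div_comm, ← this]
      field_simp
    · intro b _ hb; simp [hb]
    · simp
  have expand : ∑ t, law μ T t * tau η p0 (pt t) (qt t) =
      (∑ t, law μ T t * Hf (conv (pt t) (qt t))) - (∑ t, law μ T t * Hf (pt t)) / 2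
       - (∑ t, law μ T t * Hf (qt t)) / 2
       + η * ((∑ t, law μ T t * Hf (conv p0 (pt t))) - Hf p0 / 2 - (∑ t, law μ T t * Hf (pt t)) / 2)
       + η * ((∑ t, law μ T t * Hf (conv p0 (qt t))) - Hf p0 / 2 - (∑ t, law μ T t * Hf (qt t)) / 2) := by
    have : Hf p0 / 2 = ∑ t, law μ T t * (Hf p0 / 2) := by rw [← Finset.sum_mul, hT.2, one_mul]
    rw [this]
    simp only [Finset.sum_div, ← Finset.sum_sub_distrib, Finset.mul_sum, ← Finset.sum_add_distrib]
    refine Finset.sum_congr rfl fun t _ => ?_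
    unfold tau DD; ring
  rw [expand] at step2
  simp only [cc] at step2
  rw [cXY, cX, cY] at step2
  have := mul_le_mul_of_nonneg_left (conc X) hη
  have := mul_le_mul_of_nonneg_left (conc Y) hη
  simp only [hpt, hqt] at *
  linarith

end convPart

section couplingPart
variable {Ω α β γ δ : Type} [Fintype Ω] [Fintype α] [Fintype β] [Fintype γ] [Fintype δ]

open scoped Classical in
/-- conditionally independent coupling of two copies over `T` -/
noncomputable def cpl (μ : Ω → ℝ) (T : Ω → β) (w : Ω × Ω) : ℝ :=
  if T w.1 = T w.2 then μ w.1 * μ w.2 / law μ T (T w.1) else 0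

lemma cpl_law (μ : Ω → ℝ) (T : Ω → β) (X : Ω → α) (Y : Ω → γ) (a : α) (b : γ) (c : β) :
    law (cpl μ T) (fun w => (X w.1, Y w.2, T w.1)) (a, b, c) =
      law μ (fun ω => (X ω, T ω)) (a, c) * law μ (fun ω => (Y ω, T ω)) (b, c) / law μ T c := by
  classical
  rw [law, Fintype.sum_prod_type, law, law, Finset.sum_mul_sum, Finset.sum_div]
  refine Finset.sum_congr rfl fun ω _ => ?_
  rw [Finset.sum_div]
  refine Finset.sum_congr rfl fun ω' _ => ?_
  simp only [cpl, Prod.mk.injEq]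
  by_cases h1 : X ω = a <;> by_cases h2 : Y ω' = b <;> by_cases h3 : T ω = c <;>
    simp [h1, h2, h3, eq_comm, ite_div]

lemma law_null {μ : Ω → ℝ} (hμ : IsP μ) (X : Ω → α) (T : Ω → β) (a : α) (c : β) (h0 : law μ T c = 0) :
    law μ (fun ω => (X ω, T ω)) (a, c) = 0 := by
  have hs := law_snd μ X T c
  rw [h0] at hs
  exact (Finset.sum_eq_zero_iff_of_nonneg
    (fun g _ => law_nonneg hμ.1 (fun ω => (X ω, T ω)) (g, c))).1 hs a (Finset.mem_univ _)

lemma cpl_law_fst {μ : Ω → ℝ} (hμ : IsP μ) (T : Ω → β) (X : Ω → α) :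
    law (cpl μ T) (fun w => (X w.1, T w.1)) = law μ (fun ω => (X ω, T ω)) := by
  funext ⟨a, c⟩
  have e := law_snd (cpl μ T) (fun w => w.2) (fun w => (X w.1, T w.1)) (a, c)
  rw [← e]
  have : ∀ b, law (cpl μ T) (fun w => (w.2, X w.1, T w.1)) (b, a, c) =
      law μ (fun ω => (X ω, T ω)) (a, c) * law μ (fun ω => (ω, T ω)) (b, c) / law μ T c := by
    intro b
    rw [← cpl_law μ T X (fun ω => ω) a b c]
    exact law_inj (cpl μ T) (fun w => (X w.1, w.2, T w.1)) (fun t => (t.2.1, t.1, t.2.2))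
      (by rintro ⟨a, b, c⟩ ⟨a', b', c'⟩; simp; tauto) (a, b, c)
  simp only [this]
  rw [← Finset.sum_div, ← Finset.mul_sum, law_snd]
  by_cases h0 : law μ T c = 0
  · simp [h0, law_null hμ X T a c h0]
  · field_simp

lemma cpl_law_snd {μ : Ω → ℝ} (hμ : IsP μ) (T : Ω → β) (Y : Ω → α) :
    law (cpl μ T) (fun w => (Y w.2, T w.1)) = law μ (fun ω => (Y ω, T ω)) := by
  funext ⟨b, c⟩
  have e := law_snd (cpl μ T) (fun w => w.1) (fun w => (Y w.2, T w.1)) (b, c)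
  rw [← e]
  have : ∀ a, law (cpl μ T) (fun w => (w.1, Y w.2, T w.1)) (a, b, c) =
      law μ (fun ω => (ω, T ω)) (a, c) * law μ (fun ω => (Y ω, T ω)) (b, c) / law μ T c :=
    fun a => cpl_law μ T (fun ω => ω) Y a b c
  simp only [this]
  rw [← Finset.sum_div, ← Finset.sum_mul, law_snd]
  by_cases h0 : law μ T c = 0
  · simp [h0, law_null hμ Y T b c h0]
  · field_simp

lemma cpl_law_fst' {μ : Ω → ℝ} (hμ : IsP μ) (T : Ω → β) (X : Ω → α) :
    law (cpl μ T) (fun w => X w.1) = law μ X := by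
  funext a
  rw [← law_fst _ (fun w : Ω × Ω => X w.1) (fun w => T w.1), cpl_law_fst hμ, law_fst]

lemma cpl_law_snd' {μ : Ω → ℝ} (hμ : IsP μ) (T : Ω → β) (X : Ω → α) :
    law (cpl μ T) (fun w => X w.2) = law μ X := by
  funext a
  rw [← law_fst _ (fun w : Ω × Ω => X w.2) (fun w => T w.1), cpl_law_snd hμ, law_fst]

lemma isP_cpl {μ : Ω → ℝ} (hμ : IsP μ) (T : Ω → β) : IsP (cpl μ T) := by
  constructor
  · intro w
    unfold cpl
    split_ifs
    · exact div_nonneg (mul_nonneg (hμ.1 _) (hμ.1 _)) (law_nonneg hμ.1 _ _)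
    · exact le_rfl
  · rw [← sum_law _ (fun w => T w.1), cpl_law_fst' hμ, sum_law, hμ.2]

lemma cpl_supp {μ : Ω → ℝ} {T : Ω → β} {w : Ω × Ω} (h : cpl μ T w ≠ 0) : T w.1 = T w.2 := by
  unfold cpl at h
  by_contra hc
  exact h (if_neg hc)

lemma cpl_condIndep {μ : Ω → ℝ} (hμ : IsP μ) (T : Ω → β) (X : Ω → α) (Y : Ω → γ) (a : α) (b : γ) (c : β) :
    law (cpl μ T) (fun w => (X w.1, Y w.2, T w.1)) (a, b, c) * law (cpl μ T) (fun w => T w.1) c =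
      law (cpl μ T) (fun w => (X w.1, T w.1)) (a, c) * law (cpl μ T) (fun w => (Y w.2, T w.1)) (b, c) := by
  rw [cpl_law, cpl_law_fst hμ, cpl_law_snd hμ, cpl_law_fst' hμ]
  by_cases h0 : law μ T c = 0
  · simp [h0, law_null hμ X T a c h0]
  · field_simp

end couplingPart

section bsgPart
variable {G : Type} [AddCommGroup G] [Module (ZMod 2) G] [Fintype G]
variable {Ω α β γ δ : Type} [Fintype Ω] [Fintype α] [Fintype β] [Fintype γ] [Fintype δ]

/-- entropic Balog-Szemeredi-Gowers, core inequality -/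
lemma bsg_core {μ : Ω → ℝ} (hμ : IsP μ) (A B : Ω → G) (S : Ω → γ) :
    HH (cpl μ (fun ω => (A ω + B ω, S ω))) (fun w => (A w.1 + B w.2, (A w.1 + B w.1, S w.1)))
      - HH μ (fun ω => (A ω + B ω, S ω)) ≤
    2 * HH μ (fun ω => (A ω, S ω)) + 2 * HH μ (fun ω => (B ω, S ω)) - 3 * HH μ S
      - 2 * HH μ (fun ω => (A ω, B ω, S ω)) + HH μ (fun ω => (A ω + B ω, S ω)) := by
  set T : Ω → G × γ := fun ω => (A ω + B ω, S ω) with hT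
  set ν := cpl μ T with hν
  have hP : IsP ν := isP_cpl hμ T
  have eT : HH ν (fun w => T w.1) = HH μ T := by rw [HH, hν, cpl_law_fst' hμ, HH]
  have eS : HH ν (fun w => S w.1) = HH μ S := by rw [HH, hν, cpl_law_fst' hμ, HH]
  have supp : ∀ w, ν w ≠ 0 → A w.1 + B w.1 = A w.2 + B w.2 ∧ S w.1 = S w.2 := by
    intro w hw
    have := cpl_supp hw
    simpa [hT] using this
  -- drop the conditioning on Z
  have s1 := HH_submod hP.1 (fun w => A w.1 + B w.2) (fun w => A w.1 + B w.1) (fun w => S w.1)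
  have s1a : HH ν (fun w => (A w.1 + B w.1, S w.1)) = HH μ T := eT
  have s2 := HH_submod hP.1 (fun w => A w.1) (fun w => B w.1) (fun w => (A w.1 + B w.2, S w.1))
  have s3 := HH_submod hP.1 (fun w => A w.1) (fun w => B w.2) (fun w => S w.1)
  have s4 := HH_submod hP.1 (fun w => B w.1) (fun w => A w.2) (fun w => S w.1)
  have a1 : HH ν (fun w => (A w.1, S w.1)) = HH μ (fun ω => (A ω, S ω)) := by
    have := cpl_law_fst' hμ T (fun ω => (A ω, S ω))
    rw [HH, hν, this, HH]
  have b1 : HH ν (fun w => (B w.1, S w.1)) = HH μ (fun ω => (B ω, S ω)) := by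
    have := cpl_law_fst' hμ T (fun ω => (B ω, S ω))
    rw [HH, hν, this, HH]
  have a2 : HH ν (fun w => (A w.2, S w.1)) = HH μ (fun ω => (A ω, S ω)) := by
    have := cpl_law_snd' hμ T (fun ω => (A ω, S ω))
    rw [HH_congr hP.1 _ (fun w => (A w.2, S w.2)), HH, hν, this, HH]
    intro w w' h h'
    rw [(supp w h).2, (supp w' h').2]
  have b2 : HH ν (fun w => (B w.2, S w.1)) = HH μ (fun ω => (B ω, S ω)) := by
    have := cpl_law_snd' hμ T (fun ω => (B ω, S ω))
    rw [HH_congr hP.1 _ (fun w => (B w.2, S w.2)), HH, hν, this, HH]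
    intro w w' h h'
    rw [(supp w h).2, (supp w' h').2]
  have c1 : HH ν (fun w => (A w.1, A w.1 + B w.2, S w.1)) = HH ν (fun w => (A w.1, B w.2, S w.1)) := by
    refine HH_congr hP.1 _ _ fun w w' _ _ => ?_
    simp only [Prod.mk.injEq]
    constructor
    · rintro ⟨h1, h2, h3⟩; rw [h1] at h2; exact ⟨h1, add_left_cancel h2, h3⟩
    · rintro ⟨h1, h2, h3⟩; rw [h1, h2, h3]; simp
  have c2 : HH ν (fun w => (B w.1, A w.1 + B w.2, S w.1)) = HH ν (fun w => (B w.1, A w.2, S w.1)) := by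
    have key : ∀ w, ν w ≠ 0 → A w.1 + B w.2 = B w.1 + A w.2 := by
      intro w h
      have := (supp w h).1
      calc A w.1 + B w.2 = (A w.1 + B w.1) + B w.1 + B w.2 := by rw [g2_cancel']
        _ = B w.1 + A w.2 := by rw [this, add_right_comm, g2_cancel', add_comm]
    refine HH_congr hP.1 _ _ fun w w' h h' => ?_
    simp only [Prod.mk.injEq, key w h, key w' h']
    constructor
    · rintro ⟨h1, h2, h3⟩; rw [h1] at h2; exact ⟨h1, add_left_cancel h2, h3⟩
    · rintro ⟨h1, h2, h3⟩; rw [h1, h2, h3]; simp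
  have m0 := HH_condIndep hP.1 (fun w => (A w.1, B w.1)) (fun w => (A w.2, B w.2)) (fun w => T w.1)
    (cpl_condIndep hμ T (fun ω => (A ω, B ω)) (fun ω => (A ω, B ω)))
  have mM : HH μ (fun ω => ((A ω, B ω), T ω)) = HH μ (fun ω => (A ω, B ω, S ω)) := by
    refine HH_congr hμ.1 _ _ fun w w' h h' => ?_
    simp only [hT, Prod.mk.injEq]
    constructor
    · rintro ⟨⟨h1, h2⟩, h3, h4⟩; exact ⟨h1, h2, h4⟩
    · rintro ⟨h1, h2, h3⟩; rw [h1, h2, h3]; simp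
  have m1 : HH ν (fun w => ((A w.1, B w.1), T w.1)) = HH μ (fun ω => (A ω, B ω, S ω)) := by
    have := cpl_law_fst hμ T (fun ω => (A ω, B ω))
    rw [HH, hν, this, ← HH, mM]
  have m2 : HH ν (fun w => ((A w.2, B w.2), T w.1)) = HH μ (fun ω => (A ω, B ω, S ω)) := by
    have := cpl_law_snd hμ T (fun ω => (A ω, B ω))
    rw [HH, hν, this, ← HH, mM]
  have m3 : HH ν (fun w => ((A w.1, B w.1), (A w.2, B w.2), T w.1)) =
      HH ν (fun w => (A w.1, B w.1, A w.1 + B w.2, S w.1)) := by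
    refine HH_congr hP.1 _ _ fun w w' h h' => ?_
    have k1 := (supp w h).1
    have k2 := (supp w' h').1
    simp only [hT, Prod.mk.injEq]
    constructor
    · rintro ⟨⟨h1, h2⟩, ⟨h3, h4⟩, h5, h6⟩; rw [h1, h2, h4, h6]; simp
    · rintro ⟨h1, h2, h3, h4⟩
      rw [h1] at h3
      have h5 := add_left_cancel h3
      rw [h1, h2, h5, k1] at k2
      exact ⟨⟨h1, h2⟩, ⟨(add_right_cancel k2).symm, h5⟩, by rw [h1, h2], h4⟩
  rw [eT] at m0
  have goal : HH ν (fun w => (A w.1 + B w.2, (A w.1 + B w.1, S w.1))) =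
    HH ν (fun w => (A w.1 + B w.2, A w.1 + B w.1, S w.1)) := rfl
  linarith

lemma HH_sumpair {μ : Ω → ℝ} (hμ : IsP μ) (A B : Ω → G) (S : Ω → γ) :
    HH μ (fun ω => (A ω, (A ω + B ω, S ω))) = HH μ (fun ω => (A ω, B ω, S ω)) ∧
    HH μ (fun ω => (B ω, (A ω + B ω, S ω))) = HH μ (fun ω => (A ω, B ω, S ω)) := by
  constructor
  · refine HH_congr hμ.1 _ _ fun w w' h h' => ?_
    simp only [Prod.mk.injEq]
    constructor
    · rintro ⟨h1, h2, h3⟩; rw [h1] at h2; exact ⟨h1, add_left_cancel h2, h3⟩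
    · rintro ⟨h1, h2, h3⟩; rw [h1, h2, h3]; simp
  · refine HH_congr hμ.1 _ _ fun w w' h h' => ?_
    simp only [Prod.mk.injEq]
    constructor
    · rintro ⟨h1, h2, h3⟩; rw [h1] at h2; exact ⟨add_right_cancel h2, h1, h3⟩
    · rintro ⟨h1, h2, h3⟩; rw [h1, h2, h3]; simp

lemma conv_assoc (p q r : G → ℝ) : conv (conv p q) r = conv p (conv q r) := by
  funext g
  simp only [conv, Finset.sum_mul, Finset.mul_sum]
  rw [Finset.sum_comm]
  refine Finset.sum_congr rfl fun i _ => ?_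
  refine Fintype.sum_equiv (Equiv.addRight i) _ _ fun h => ?_
  simp only [Equiv.coe_addRight]
  have : g + i + (h + i) = g + h := by
    rw [add_add_add_comm, g2_self, add_zero]
  rw [this]; ring

/-- fibring estimate -/
lemma fibring {η : ℝ} (hη : 0 ≤ η) {p0 p1 p2 : G → ℝ} (hp0 : IsP p0)
    (hm : ∀ p q, IsP p → IsP q → tau η p0 p1 p2 ≤ tau η p0 p q)
    {μ : Ω → ℝ} (hμ : IsP μ) (Y1 Y2 Y3 Y4 U V S : Ω → G) (h4 : Ind4 μ Y1 Y2 Y3 Y4)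
    {a1 a2 a3 a4 : G → ℝ} (l1 : law μ Y1 = a1) (l2 : law μ Y2 = a2) (l3 : law μ Y3 = a3)
    (l4 : law μ Y4 = a4)
    (hU : ∀ ω, U ω = Y1 ω + Y2 ω) (hV : ∀ ω, V ω = Y2 ω + Y4 ω)
    (hS : ∀ ω, S ω = (Y1 ω + Y2 ω) + (Y3 ω + Y4 ω)) :
    HH μ (fun ω => (U ω, S ω)) = Hf (conv a1 a2) + Hf (conv a3 a4) ∧
    HH μ (fun ω => (V ω, S ω)) = Hf (conv a1 a3) + Hf (conv a2 a4) ∧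
    HH μ S = Hf (conv (conv a1 a2) (conv a3 a4)) ∧
    HH μ (fun ω => (U ω, S ω)) + HH μ (fun ω => (V ω, S ω)) - HH μ (fun ω => (U ω, V ω, S ω)) - HH μ S
      ≤ DD a1 a2 + DD a3 a4 - 2 * tau η p0 p1 p2 +
        η * (2 * DD p0 a1 + 2 * DD p0 a2 + DD a1 a3 + DD a2 a4) := by
  have ha1 : IsP a1 := l1 ▸ isP_law hμ _
  have ha2 : IsP a2 := l2 ▸ isP_law hμ _
  have ha3 : IsP a3 := l3 ▸ isP_law hμ _
  have ha4 : IsP a4 := l4 ▸ isP_law hμ _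
  have hS' : ∀ ω, S ω = (Y1 ω + Y3 ω) + (Y2 ω + Y4 ω) := fun ω => by rw [hS]; abel
  obtain ⟨i12, i34, i1234⟩ := h4.pair hμ
  obtain ⟨i13, i24, i1324⟩ := h4.p1324.pair hμ
  set T : Ω → G × G := fun ω => (Y1 ω + Y3 ω, Y2 ω + Y4 ω) with hT
  have eU : HH μ (fun ω => (U ω, S ω)) = Hf (conv a1 a2) + Hf (conv a3 a4) := by
    rw [HH_congr hμ.1 _ (fun ω => (Y1 ω + Y2 ω, Y3 ω + Y4 ω)), HH_pairsum hμ h4, l1, l2, l3, l4]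
    intro ω ω' _ _
    simp only [hU, hS, Prod.mk.injEq]
    constructor
    · rintro ⟨h1, h2⟩; rw [h1] at h2; exact ⟨h1, add_left_cancel h2⟩
    · rintro ⟨h1, h2⟩; rw [h1, h2]; simp
  have eT : HH μ T = Hf (conv a1 a3) + Hf (conv a2 a4) := by
    rw [HH_pairsum hμ h4.p1324, l1, l2, l3, l4]
  have eV : HH μ (fun ω => (V ω, S ω)) = Hf (conv a1 a3) + Hf (conv a2 a4) := by
    rw [← eT]
    refine HH_congr hμ.1 _ _ fun ω ω' _ _ => ?_
    simp only [hT, hV, hS', Prod.mk.injEq]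
    constructor
    · rintro ⟨h1, h2⟩; rw [h1] at h2; exact ⟨add_right_cancel h2, h1⟩
    · rintro ⟨h1, h2⟩; rw [h1, h2]; simp
  have lS : law μ S = conv (conv a1 a2) (conv a3 a4) := by
    have : S = fun ω => (Y1 ω + Y2 ω) + (Y3 ω + Y4 ω) := funext hS
    have j : IndepR μ (fun ω => Y1 ω + Y2 ω) (fun ω => Y3 ω + Y4 ω) :=
      i1234.comp (fun t => t.1 + t.2) (fun t => t.1 + t.2)
    rw [this, law_add j, law_add i12, law_add i34, l1, l2, l3, l4]
  have lS' : law μ S = conv (conv a1 a3) (conv a2 a4) := by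
    have : S = fun ω => (Y1 ω + Y3 ω) + (Y2 ω + Y4 ω) := funext hS'
    have j : IndepR μ (fun ω => Y1 ω + Y3 ω) (fun ω => Y2 ω + Y4 ω) :=
      i1324.comp (fun t => t.1 + t.2) (fun t => t.1 + t.2)
    rw [this, law_add j, law_add i13, law_add i24, l1, l2, l3, l4]
  refine ⟨eU, eV, by rw [HH, lS], ?_⟩
  -- (B) conditional minimality
  have j0 : IndepR μ (fun ω => (Y1 ω, Y1 ω + Y3 ω)) (fun ω => (Y2 ω, Y2 ω + Y4 ω)) :=
    i1324.comp (fun t => (t.1, t.1 + t.2)) (fun t => (t.1, t.1 + t.2))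
  have j1 : IndepR μ (fun ω => (Y1 ω, Y1 ω + Y3 ω)) (fun ω => (Y2 ω + Y4 ω)) :=
    i1324.comp (fun t => (t.1, t.1 + t.2)) (fun t => (t.1 + t.2))
  have j2 : IndepR μ (fun ω => (Y1 ω + Y3 ω)) (fun ω => (Y2 ω, Y2 ω + Y4 ω)) :=
    i1324.comp (fun t => (t.1 + t.2)) (fun t => (t.1, t.1 + t.2))
  have j3 : IndepR μ (fun ω => (Y1 ω + Y3 ω)) (fun ω => (Y2 ω + Y4 ω)) :=
    i1324.comp (fun t => (t.1 + t.2)) (fun t => (t.1 + t.2))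
  have B := condMin hη hp0 hm hμ Y1 Y2 T (by
    rintro a b ⟨s, t⟩
    have e0 := law_inj μ (fun ω => ((Y1 ω, Y1 ω + Y3 ω), (Y2 ω, Y2 ω + Y4 ω)))
      (fun t => (t.1.1, t.2.1, (t.1.2, t.2.2)))
      (by rintro ⟨⟨a, b⟩, c, d⟩ ⟨⟨a', b'⟩, c', d'⟩; simp; tauto) ((a, s), (b, t))
    have e1 := law_inj μ (fun ω => ((Y1 ω, Y1 ω + Y3 ω), (Y2 ω + Y4 ω)))
      (fun t => (t.1.1, (t.1.2, t.2)))
      (by rintro ⟨⟨a, b⟩, c⟩ ⟨⟨a', b'⟩, c'⟩; simp; tauto) ((a, s), t)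
    have e2 := law_inj μ (fun ω => ((Y1 ω + Y3 ω), (Y2 ω, Y2 ω + Y4 ω)))
      (fun t => (t.2.1, (t.1, t.2.2)))
      (by rintro ⟨b, c, d⟩ ⟨b', c', d'⟩; simp; tauto) (s, (b, t))
    dsimp only at e0 e1 e2
    rw [hT, e0, e1, e2, j0, j1, j2, j3]
    ring)
  have eY1 : HH μ (fun ω => (Y1 ω, T ω)) = Hf a1 + Hf a3 + Hf (conv a2 a4) := by
    have j : IndepR μ (fun ω => (Y1 ω, Y3 ω)) (fun ω => (Y2 ω + Y4 ω)) :=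
      i1324.comp id (fun t => (t.1 + t.2))
    rw [HH_congr hμ.1 _ (fun ω => ((Y1 ω, Y3 ω), Y2 ω + Y4 ω)), HH_indep hμ.1 _ _ j, HH_indep hμ.1 _ _ i13,
      HH, HH, HH, law_add i24, l1, l2, l3, l4]
    intro ω ω' _ _
    simp only [hT, Prod.mk.injEq]
    constructor
    · rintro ⟨h1, h2, h3⟩; rw [h1] at h2; exact ⟨⟨h1, add_left_cancel h2⟩, h3⟩
    · rintro ⟨⟨h1, h2⟩, h3⟩; rw [h1, h2, h3]; simp
  have eY2 : HH μ (fun ω => (Y2 ω, T ω)) = Hf a2 + Hf a4 + Hf (conv a1 a3) := by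
    have j : IndepR μ (fun ω => (Y1 ω + Y3 ω)) (fun ω => (Y2 ω, Y4 ω)) :=
      i1324.comp (fun t => (t.1 + t.2)) id
    rw [HH_congr hμ.1 _ (fun ω => (Y1 ω + Y3 ω, (Y2 ω, Y4 ω))), HH_indep hμ.1 _ _ j, HH_indep hμ.1 _ _ i24,
      HH, HH, HH, law_add i13, l1, l2, l3, l4]
    · ring
    intro ω ω' _ _
    simp only [hT, Prod.mk.injEq]
    constructor
    · rintro ⟨h1, h2, h3⟩; rw [h1] at h3; exact ⟨h2, h1, add_left_cancel h3⟩
    · rintro ⟨h1, h2, h3⟩; rw [h1, h2, h3]; simp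
  have eUV : HH μ (fun ω => (Y1 ω + Y2 ω, T ω)) = HH μ (fun ω => (U ω, V ω, S ω)) := by
    refine HH_congr hμ.1 _ _ fun ω ω' _ _ => ?_
    simp only [hT, hU, hV, hS', Prod.mk.injEq]
    constructor
    · rintro ⟨h1, h2, h3⟩; rw [h1, h2, h3]; simp
    · rintro ⟨h1, h2, h3⟩; rw [h2] at h3; exact ⟨h1, add_right_cancel h3, h2⟩
  -- (A)
  have A := hm _ _ (isP_conv ha1 ha3) (isP_conv ha2 ha4)
  have k1 := Hf_KV hp0 ha1 ha3
  have k2 := Hf_KV hp0 ha2 ha4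
  rw [conv_assoc] at k1 k2
  rw [eUV, eY1, eY2, eT, l1, l2] at B
  have eS2 : HH μ S = Hf (conv (conv a1 a3) (conv a2 a4)) := by rw [HH, lS']
  rw [eU, eV, eS2]
  have z1 := mul_le_mul_of_nonneg_left k1 hη
  have z2 := mul_le_mul_of_nonneg_left k2 hη
  simp only [tau, DD] at *
  linarith

/-- at a minimiser the distance vanishes -/
lemma min_dist_zero {p0 p1 p2 : G → ℝ} (hp0 : IsP p0) (hp1 : IsP p1) (hp2 : IsP p2)
    (hm : ∀ p q, IsP p → IsP q → tau (1/100) p0 p1 p2 ≤ tau (1/100) p0 p q) : DD p1 p2 ≤ 0 := by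
  obtain ⟨μ, hμ, h4, l1, l2, l3, l4⟩ := exists_ind4 hp1 hp2 hp2 hp1
  set X1 : G × G × G × G → G := fun t => t.1
  set X2 : G × G × G × G → G := fun t => t.2.1
  set X3 : G × G × G × G → G := fun t => t.2.2.1
  set X4 : G × G × G × G → G := fun t => t.2.2.2
  set S : G × G × G × G → G := fun ω => (X1 ω + X2 ω) + (X3 ω + X4 ω)
  set U : G × G × G × G → G := fun ω => X1 ω + X2 ω
  set V : G × G × G × G → G := fun ω => X2 ω + X4 ω
  set W : G × G × G × G → G := fun ω => U ω + V ω
  have hη : (0:ℝ) ≤ 1/100 := by norm_num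
  have hW : ∀ ω, W ω = X1 ω + X4 ω := fun ω => by
    show X1 ω + X2 ω + (X2 ω + X4 ω) = _
    rw [← add_assoc, g2_cancel']
  obtain ⟨eU, eV, eS, I1⟩ := fibring hη hp0 hm hμ X1 X2 X3 X4 U V S h4 l1 l2 l3 l4
    (fun _ => rfl) (fun _ => rfl) (fun _ => rfl)
  obtain ⟨-, eW, -, I2⟩ := fibring hη hp0 hm hμ X2 X1 X3 X4 U W S h4.p2134 l2 l1 l3 l4
    (fun ω => add_comm _ _) hW (fun ω => by simp only [S]; abel)
  obtain ⟨-, -, -, I3⟩ := fibring hη hp0 hm hμ X2 X4 X3 X1 V W S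
    (h4.p2134.p1243.p1324.p1243) l2 l4 l3 l1
    (fun ω => rfl) (fun ω => by rw [hW, add_comm]) (fun ω => by simp only [S]; abel)
  have M2 : HH μ (fun ω => (U ω, W ω, S ω)) = HH μ (fun ω => (U ω, V ω, S ω)) :=
    (HH_sumpair hμ U V S).1
  have M3 : HH μ (fun ω => (V ω, W ω, S ω)) = HH μ (fun ω => (U ω, V ω, S ω)) :=
    (HH_sumpair hμ U V S).2
  set T : G × G × G × G → G × G := fun ω => (U ω + V ω, S ω)
  have B := condMin hη hp0 hm (isP_cpl hμ T) (fun w => U w.1) (fun w => V w.2) (fun w => T w.1)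
    (cpl_condIndep hμ T U V)
  have C := bsg_core hμ U V S
  obtain ⟨i12, -, -⟩ := h4.pair hμ
  obtain ⟨i24, -, -⟩ := (h4.p1243.p1324.p2134.p1324.p2134).pair hμ
  have b1 : HH (cpl μ T) (fun w => (U w.1, T w.1)) = HH μ (fun ω => (U ω, V ω, S ω)) := by
    rw [HH, cpl_law_fst hμ, ← (HH_sumpair hμ U V S).1, HH]
  have b2 : HH (cpl μ T) (fun w => (V w.2, T w.1)) = HH μ (fun ω => (U ω, V ω, S ω)) := by
    rw [HH, cpl_law_snd hμ, ← (HH_sumpair hμ U V S).2, HH]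
  have b3 : HH (cpl μ T) (fun w => T w.1) = HH μ (fun ω => (W ω, S ω)) := by
    rw [HH, cpl_law_fst' hμ, HH]
  have b4 : law (cpl μ T) (fun w => U w.1) = conv p1 p2 := by
    rw [cpl_law_fst' hμ, law_add i12, l1, l2]
  have b5 : law (cpl μ T) (fun w => V w.2) = conv p2 p1 := by
    rw [cpl_law_snd' hμ, law_add i24, l2, l4]
  rw [b1, b2, b3, b4, b5] at B
  have C' : HH (cpl μ T) (fun w => (U w.1 + V w.2, T w.1)) - HH μ (fun ω => (W ω, S ω)) ≤
    2 * HH μ (fun ω => (U ω, S ω)) + 2 * HH μ (fun ω => (V ω, S ω)) - 3 * HH μ S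
      - 2 * HH μ (fun ω => (U ω, V ω, S ω)) + HH μ (fun ω => (W ω, S ω)) := C
  have k1 := Hf_KV hp0 hp1 hp2
  have k2 := Hf_KV hp0 hp2 hp1
  rw [conv_assoc] at k1 k2
  have t1 := Hf_triangle hp1 hp2 hp1
  have t2 := Hf_triangle hp2 hp1 hp2
  have c12 := conv_comm p2 p1
  have h1 := Hf_KV hp1 hp2 (isP_conv hp2 hp1)
  have h2 := Hf_KV hp2 hp2 hp1
  rw [conv_assoc] at h2
  have h3 := Hf_KV hp2 hp1 (isP_conv hp1 hp2)
  have h4 := Hf_KV hp1 hp1 hp2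
  rw [conv_assoc] at h4
  clear_value X1 X2 X3 X4
  clear C b1 b2 b3 b4 b5 hm i12 i24
  have B' : HH (cpl μ T) (fun w => (U w.1 + V w.2, T w.1)) =
    HH (cpl μ T) (fun w => (U w.1 + V w.2, T w.1)) := rfl
  rw [M2] at I2
  rw [M3] at I3
  generalize HH (cpl μ T) (fun w => (U w.1 + V w.2, T w.1)) = e0 at *
  generalize HH μ (fun ω => (U ω, V ω, S ω)) = e1 at *
  generalize HH μ (fun ω => (U ω, S ω)) = e2 at *
  generalize HH μ (fun ω => (V ω, S ω)) = e3 at *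
  generalize HH μ (fun ω => (W ω, S ω)) = e4 at *
  generalize HH μ S = e5 at *
  simp only [tau, DD, c12] at I1 I2 I3 B C' k1 k2 t1 t2 h1 h2 h3 h4 eU eV eS eW ⊢
  linarith
end bsgPart

section pfrPart
variable {G : Type} [AddCommGroup G] [Module (ZMod 2) G] [Fintype G]

lemma continuous_Hf : Continuous (fun p : G → ℝ => Hf p) := by
  unfold Hf
  exact continuous_finsetSum _ fun a _ => Real.continuous_negMulLog.comp (continuous_apply a)

lemma continuous_conv : Continuous (fun t : (G → ℝ) × (G → ℝ) => conv t.1 t.2) := by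
  unfold conv
  fun_prop

lemma continuous_DD : Continuous (fun t : (G → ℝ) × (G → ℝ) => DD t.1 t.2) := by
  unfold DD
  have h1 := continuous_Hf (G := G)
  have h2 := continuous_conv (G := G)
  have h3 := h1.comp h2
  have h4 := h1.comp (continuous_fst (X := G → ℝ) (Y := G → ℝ))
  have h5 := h1.comp (continuous_snd (X := G → ℝ) (Y := G → ℝ))
  exact (h3.sub (h4.div_const 2)).sub (h5.div_const 2)

lemma continuous_DD1 (p0 : G → ℝ) : Continuous (fun q : G → ℝ => DD p0 q) := by
  have h : Continuous (fun q : G → ℝ => (p0, q)) := continuous_const.prodMk continuous_id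
  have := continuous_DD.comp h
  simpa only [Function.comp_def] using this

lemma continuous_tau (η : ℝ) (p0 : G → ℝ) :
    Continuous (fun t : (G → ℝ) × (G → ℝ) => tau η p0 t.1 t.2) := by
  unfold tau
  have h1 := (continuous_DD1 p0).comp (continuous_fst (X := G → ℝ) (Y := G → ℝ))
  have h2 := (continuous_DD1 p0).comp (continuous_snd (X := G → ℝ) (Y := G → ℝ))
  simp only [Function.comp_def] at h1 h2
  exact (continuous_DD.add (h1.const_mul η)).add (h2.const_mul η)

lemma exists_min {p0 : G → ℝ} (hp0 : IsP p0) (η : ℝ) : ∃ p1 p2 : G → ℝ, IsP p1 ∧ IsP p2 ∧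
    ∀ p q, IsP p → IsP q → tau η p0 p1 p2 ≤ tau η p0 p q := by
  have hc : IsCompact (stdSimplex ℝ G ×ˢ stdSimplex ℝ G) :=
    (isCompact_stdSimplex ℝ G).prod (isCompact_stdSimplex ℝ G)
  obtain ⟨t, ht, hmin⟩ := hc.exists_isMinOn ⟨(p0, p0), hp0, hp0⟩ (continuous_tau η p0).continuousOn
  refine ⟨t.1, t.2, ht.1, ht.2, fun p q hp hq => ?_⟩
  have hpq : (p, q) ∈ stdSimplex ℝ G ×ˢ stdSimplex ℝ G := ⟨hp, hq⟩
  exact isMinOn_iff.1 hmin (p, q) hpq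

/-- equality case of `Hf p ≤ Hf (conv p p)` -/
lemma eq_of_conv_self {p : G → ℝ} (hp : IsP p) (h : Hf (conv p p) ≤ Hf p) (a b : G)
    (ha : p a ≠ 0) (hb : p b ≠ 0) (g : G) : p (g + a) = p (g + b) := by
  have hl : ∀ g, ∑ h, p h * Real.negMulLog (p (g + h)) ≤ Real.negMulLog (conv p p g) := by
    intro g
    have := Real.concaveOn_negMulLog.le_map_sum (t := Finset.univ) (w := p) (p := fun h => p (g + h))
      (fun i _ => hp.1 i) hp.2 (fun i _ => hp.1 _)
    simpa [conv] using this
  have hs : ∑ g, ∑ h, p h * Real.negMulLog (p (g + h)) = Hf p := by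
    rw [Finset.sum_comm]
    have : ∀ h : G, ∑ g, p h * Real.negMulLog (p (g + h)) = p h * Hf p := fun h => by
      rw [← Finset.mul_sum, Hf]
      congr 1
      exact Fintype.sum_equiv (Equiv.addRight h) _ _ (fun g => by simp)
    simp only [this, ← Finset.sum_mul, hp.2, one_mul]
  have he : ∑ h, p h * Real.negMulLog (p (g + h)) = Real.negMulLog (conv p p g) := by
    by_contra hne
    have hlt : ∑ g, ∑ h, p h * Real.negMulLog (p (g + h)) < ∑ g, Real.negMulLog (conv p p g) :=
      Finset.sum_lt_sum (fun g _ => hl g) ⟨g, Finset.mem_univ _, lt_of_le_of_ne (hl g) hne⟩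
    rw [hs] at hlt
    exact absurd h (not_le.2 hlt)
  have := Real.strictConcaveOn_negMulLog.map_sum_eq_iff_of_nonneg (t := Finset.univ)
    (w := p) (p := fun h => p (g + h)) (fun i _ => hp.1 i) hp.2 (fun i _ => hp.1 _)
  refine this.1 ?_ (Finset.mem_univ a) ha (Finset.mem_univ b) hb
  simpa [conv] using he.symm

lemma DD_nonneg {p q : G → ℝ} (hp : IsP p) (hq : IsP q) : 0 ≤ DD p q := by
  have h1 := Hf_le_conv_left hp hq
  have h2 := Hf_le_conv_right hp hq
  unfold DD; linarith

/-- period group of a function -/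
def periodGroup (p : G → ℝ) : Submodule (ZMod 2) G where
  carrier := {v | ∀ g, p (g + v) = p g}
  zero_mem' := fun g => by simp
  add_mem' := fun {a b} ha hb g => by rw [← add_assoc, hb, ha]
  smul_mem' := fun c v hv g => by
    have : c = 0 ∨ c = 1 := by revert c; decide
    rcases this with rfl | rfl
    · simp
    · rw [one_smul]; exact hv g

open scoped Classical in
lemma uniform_of_conv_self {p : G → ℝ} (hp : IsP p) (h : Hf (conv p p) ≤ Hf p) :
    ∃ (H : Submodule (ZMod 2) G) (x : G), (∀ g, p g = if g + x ∈ H then ((Nat.card H : ℝ))⁻¹ else 0) ∧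
      Hf p = Real.log (Nat.card H) := by
  obtain ⟨x, hx⟩ : ∃ x, p x ≠ 0 := by
    by_contra hc
    push Not at hc
    have := hp.2
    simp [hc] at this
  have key := eq_of_conv_self hp h
  have hmem : ∀ g, p g = if g + x ∈ periodGroup p then p x else 0 := by
    intro g
    split_ifs with hg
    · have := hg x
      rw [← this, add_comm g x, g2_cancel]
    · by_contra hne
      refine hg fun y => ?_
      rw [add_comm g x, ← add_assoc, key g x hne hx (y + x), g2_cancel']
  have hcount : ∀ c : ℝ, ∑ g, (if g + x ∈ periodGroup p then c else 0) = Nat.card (periodGroup p) * c := by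
    intro c
    rw [Fintype.sum_equiv (Equiv.addRight x) (fun g => if g + x ∈ periodGroup p then c else 0) (fun g => if g ∈ periodGroup p then c else 0) (fun g => rfl)]
    rw [← Finset.sum_filter, Finset.sum_const, nsmul_eq_mul, Nat.card_eq_fintype_card, Fintype.card_subtype]
  have hpos : (0:ℝ) < Nat.card (periodGroup p) := by
    exact_mod_cast Nat.card_pos
  have hval : p x = ((Nat.card (periodGroup p) : ℝ))⁻¹ := by
    have h1 := hp.2
    rw [Finset.sum_congr rfl fun g _ => hmem g, hcount] at h1
    field_simp
    linarith
  refine ⟨periodGroup p, x, fun g => by rw [← hval]; exact hmem g, ?_⟩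
  unfold Hf
  have : ∀ g, Real.negMulLog (p g) = if g + x ∈ periodGroup p then Real.negMulLog (p x) else 0 := by
    intro g
    rw [hmem g]
    split_ifs <;> simp
  rw [Finset.sum_congr rfl fun g _ => this g, hcount, hval, Real.negMulLog, Real.log_inv]
  field_simp

lemma exists_large {r : G → ℝ} (hr : IsP r) : ∃ g, Real.exp (- Hf r) ≤ r g := by
  by_contra hc
  push Not at hc
  have : ∃ x, r x ≠ 0 := by
    by_contra hc
    push Not at hc
    have := hr.2
    simp [hc] at this
  obtain ⟨x, hx⟩ := this
  have hlt : ∀ g, r g ≠ 0 → Hf r < - Real.log (r g) := by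
    intro g hg
    have := (Real.log_lt_iff_lt_exp (lt_of_le_of_ne (hr.1 g) hg.symm)).2 (hc g)
    linarith
  have : ∑ g, r g * Hf r < ∑ g, Real.negMulLog (r g) := by
    refine Finset.sum_lt_sum (fun g _ => ?_) ⟨x, Finset.mem_univ _, ?_⟩
    · by_cases hg : r g = 0
      · simp [hg]
      · have := mul_le_mul_of_nonneg_left (hlt g hg).le (hr.1 g)
        rw [Real.negMulLog]; linarith
    · have := mul_lt_mul_of_pos_left (hlt x hx) (lt_of_le_of_ne (hr.1 x) hx.symm)
      rw [Real.negMulLog]; linarith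
  rw [← Finset.sum_mul, hr.2, one_mul] at this
  exact absurd this (lt_irrefl _)

open scoped Classical in
/-- polynomial Freiman-Ruzsa over the field with two elements, entropic form -/
theorem pfr {p0 : G → ℝ} (hp0 : IsP p0) : ∃ (H : Submodule (ZMod 2) G) (x : G),
    Real.log (Nat.card H) ≤ Hf p0 + 204 * DD p0 p0 ∧
    Real.exp (-(204 * DD p0 p0)) ≤ ∑ g, if g + x ∈ H then p0 g else 0 := by
  obtain ⟨p1, p2, h1, h2, hm⟩ := exists_min hp0 (1/100)
  have hz := min_dist_zero hp0 h1 h2 hm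
  have hself : Hf (conv p1 p1) ≤ Hf p1 := by
    have t := Hf_triangle h1 h2 h1
    rw [conv_comm p2 p1] at t
    have a := Hf_le_conv_left h1 h2
    have b := Hf_le_conv_right h1 h2
    unfold DD at hz
    linarith
  obtain ⟨H, x, hval, hHf⟩ := uniform_of_conv_self h1 hself
  have hD : DD p0 p1 ≤ 102 * DD p0 p0 := by
    have a := hm p0 p0 hp0 hp0
    have b := DD_nonneg h1 h2
    have c := DD_nonneg hp0 h2
    unfold tau at a
    linarith
  have a1 := Hf_le_conv_left hp0 h1
  have a2 := Hf_le_conv_right hp0 h1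
  obtain ⟨g, hg⟩ := exists_large (isP_conv hp0 h1)
  have hpos : (0:ℝ) < Nat.card H := by
    exact_mod_cast Nat.card_pos
  refine ⟨H, g + x, ?_, ?_⟩
  · rw [← hHf]; unfold DD at *; linarith
  · have e : conv p0 p1 g = (Nat.card H : ℝ)⁻¹ * ∑ h, if h + (g + x) ∈ H then p0 h else 0 := by
      rw [conv, Finset.mul_sum]
      refine Finset.sum_congr rfl fun h _ => ?_
      rw [hval, show g + h + x = h + (g + x) by abel]
      split_ifs <;> ring
    rw [e] at hg
    have h3 : Real.exp (Hf p1 - Hf (conv p0 p1)) ≤ ∑ h, if h + (g + x) ∈ H then p0 h else 0 := by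
      rw [sub_eq_add_neg, Real.exp_add, hHf, Real.exp_log hpos]
      rw [inv_mul_eq_div, le_div_iff₀ hpos] at hg
      linarith
    refine le_trans (Real.exp_le_exp.2 ?_) h3
    unfold DD at *; linarith
end pfrPart

section bsgSets
variable {G : Type} [AddCommGroup G] [Module (ZMod 2) G] [Fintype G]
variable {Ω α β γ δ : Type} [Fintype Ω] [Fintype α] [Fintype β] [Fintype γ] [Fintype δ]

lemma condHf_add {μ : Ω → ℝ} (hμ : IsP μ) (X Y : Ω → G) (T : Ω → β)
    (hi : ∀ a b c, law μ (fun ω => (X ω, Y ω, T ω)) (a, b, c) * law μ T c =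
      law μ (fun ω => (X ω, T ω)) (a, c) * law μ (fun ω => (Y ω, T ω)) (b, c)) :
    ∑ t, law μ T t * Hf (conv (fun g => law μ (fun ω => (X ω, T ω)) (g, t) / law μ T t)
      (fun g => law μ (fun ω => (Y ω, T ω)) (g, t) / law μ T t)) =
      HH μ (fun ω => (X ω + Y ω, T ω)) - HH μ T := by
  classical
  rw [← condHf hμ (fun ω => X ω + Y ω) T]
  refine Finset.sum_congr rfl fun t _ => ?_
  by_cases h0 : law μ T t = 0
  · simp [h0]
  congr 2
  funext g
  have e1 := congrFun (law_comp μ (fun ω => (X ω, Y ω, T ω)) (fun s => (s.1 + s.2.1, s.2.2))) (g, t)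
  dsimp only at e1
  have e2 : ∀ (ρ : G × G × β → ℝ), law ρ (fun s => (s.1 + s.2.1, s.2.2)) (g, t) =
      ∑ a, ∑ b, ∑ c, if a + b = g ∧ c = t then ρ (a, b, c) else 0 := by
    intro ρ
    rw [law]
    simp only [Fintype.sum_prod_type, Prod.mk.injEq]
  rw [← e1, e2]
  rw [conv, Finset.sum_div]
  refine Finset.sum_congr rfl fun a _ => ?_
  have : ∀ b c, (if a + b = g ∧ c = t then law μ (fun ω => (X ω, Y ω, T ω)) (a, b, c) else 0) =
    if b = g + a then (if c = t then law μ (fun ω => (X ω, Y ω, T ω)) (a, b, c) else 0) else 0 := by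
    intro b c
    rw [g2_iff]
    by_cases h1 : b = g + a <;> by_cases h2 : c = t <;> simp [h1, h2]
  simp only [this]
  rw [Finset.sum_eq_single (g + a)]
  · simp only [if_true, Finset.sum_ite_eq', Finset.mem_univ]
    have := hi a (g + a) t
    rw [div_mul_div_comm, ← this]
    field_simp
  · intro b _ hb; simp [hb]
  · simp

lemma Hf_flat {p : α → ℝ} (hp : IsP p) {c : ℝ} (h : ∀ g, p g = 0 ∨ p g = c) : Hf p = - Real.log c := by
  have : ∀ g, Real.negMulLog (p g) = p g * (- Real.log c) := by
    intro g
    rcases h g with h | h <;> simp [h, Real.negMulLog]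
  rw [Hf, Finset.sum_congr rfl fun g _ => this g, ← Finset.sum_mul, hp.2, one_mul]

lemma law_id (p : α → ℝ) : law p (fun a => a) = p := by
  classical
  funext t
  rw [law, Finset.sum_eq_single t]
  · simp
  · intro b _ hb; simp [hb]
  · simp

open scoped Classical in
lemma bsg_sets (A : Finset G) (E : Finset (G × G))
    (hE : ∀ t ∈ E, t.1 ∈ A ∧ t.2 ∈ A ∧ t.1 + t.2 ∈ A) (hne : E.Nonempty) :
    ∃ q : G → ℝ, IsP q ∧ (∀ g, q g ≠ 0 → g ∈ A) ∧ (∀ g, q g ≤ Real.exp (- Hf q)) ∧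
      Hf q ≤ Real.log A.card ∧
      DD q q ≤ 8 * (2 * Real.log A.card - Real.log E.card) ∧
      Real.log A.card - Hf q ≤ 4 * (2 * Real.log A.card - Real.log E.card) := by
  have hepos : (0:ℝ) < E.card := by exact_mod_cast hne.card_pos
  set μ : G × G → ℝ := fun t => if t ∈ E then (E.card : ℝ)⁻¹ else 0 with hμd
  have hμ : IsP μ := by
    refine ⟨fun t => ?_, ?_⟩
    · simp only [hμd]; split_ifs <;> positivity
    · simp only [hμd]
      rw [← Finset.sum_filter, Finset.sum_const, nsmul_eq_mul]
      simp [hepos.ne']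
  have supp : ∀ t, μ t ≠ 0 → t ∈ E := by
    intro t ht
    by_contra hc
    exact ht (if_neg hc)
  set Aa : G × G → G := fun t => t.1 with hA
  set Bb : G × G → G := fun t => t.2 with hB
  set S : G × G → Unit := fun _ => () with hS
  have core := bsg_core hμ Aa Bb S
  set T : G × G → G × Unit := fun ω => (Aa ω + Bb ω, S ω) with hT
  set M := Real.log A.card with hM
  have u1 : HH μ (fun ω => (Aa ω, S ω)) ≤ M := by
    rw [HH_congr hμ.1 _ Aa (by simp [hS])]
    exact HH_le_log hμ _ A fun ω h => (hE ω (supp ω h)).1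
  have u2 : HH μ (fun ω => (Bb ω, S ω)) ≤ M := by
    rw [HH_congr hμ.1 _ Bb (by simp [hS])]
    exact HH_le_log hμ _ A fun ω h => (hE ω (supp ω h)).2.1
  have u3 : HH μ T ≤ M := by
    rw [HH_congr hμ.1 T (fun ω => Aa ω + Bb ω) (by simp [hS, hT])]
    exact HH_le_log hμ _ A fun ω h => (hE ω (supp ω h)).2.2
  have u4 : HH μ S = 0 := HH_const hμ S (by simp [hS])
  have u5 : HH μ (fun ω => (Aa ω, Bb ω, S ω)) = Real.log E.card := by
    rw [HH_congr hμ.1 _ (fun ω => ω) (by simp [hS, hA, hB, Prod.ext_iff]), HH]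
    rw [law_id, Hf_flat hμ (c := (E.card : ℝ)⁻¹), Real.log_inv, neg_neg]
    intro g
    simp only [hμd]; split_ifs <;> simp
  have hν := isP_cpl hμ T
  have cAB := condHf_add hν (fun w => Aa w.1) (fun w => Bb w.2) (fun w => T w.1)
    (cpl_condIndep hμ T Aa Bb)
  have cA := condHf hμ Aa T
  have cB := condHf hμ Bb T
  have e1 : law (cpl μ T) (fun w => T w.1) = law μ T := cpl_law_fst' hμ T T
  have e2 : HH (cpl μ T) (fun w => T w.1) = HH μ T := by rw [HH, e1, HH]
  rw [e2, e1, cpl_law_fst hμ, cpl_law_snd hμ] at cAB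
  have sp := HH_sumpair hμ Aa Bb S
  set p : G × Unit → G → ℝ := fun t g => law μ (fun ω => (Aa ω, T ω)) (g, t) / law μ T t with hp
  set q : G × Unit → G → ℝ := fun t g => law μ (fun ω => (Bb ω, T ω)) (g, t) / law μ T t with hq
  have hlT := isP_law hμ T
  have avg : ∑ t, law μ T t * (DD (p t) (q t) + (M - Hf (p t))) ≤ 4 * (2 * M - Real.log E.card) := by
    have ex : ∑ t, law μ T t * (DD (p t) (q t) + (M - Hf (p t))) =
      (∑ t, law μ T t * Hf (conv (p t) (q t))) - (∑ t, law μ T t * Hf (p t)) / 2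
       - (∑ t, law μ T t * Hf (q t)) / 2 + (M - ∑ t, law μ T t * Hf (p t)) := by
      have : M = ∑ t, law μ T t * M := by rw [← Finset.sum_mul, hlT.2, one_mul]
      conv_rhs => rw [this]
      simp only [Finset.sum_div, ← Finset.sum_sub_distrib, ← Finset.sum_add_distrib]
      refine Finset.sum_congr rfl fun t _ => ?_
      unfold DD; ring
    rw [ex, cAB, cA, cB]
    have s1 : HH μ (fun ω => (Aa ω, T ω)) = Real.log E.card := by rw [← u5]; exact sp.1
    have s2 : HH μ (fun ω => (Bb ω, T ω)) = Real.log E.card := by rw [← u5]; exact sp.2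
    have core' : HH (cpl μ T) (fun w => (Aa w.1 + Bb w.2, T w.1)) - HH μ T ≤
      2 * HH μ (fun ω => (Aa ω, S ω)) + 2 * HH μ (fun ω => (Bb ω, S ω)) - 3 * HH μ S
      - 2 * HH μ (fun ω => (Aa ω, Bb ω, S ω)) + HH μ T := core
    linarith
  obtain ⟨t, ht0, ht⟩ : ∃ t, law μ T t ≠ 0 ∧
      DD (p t) (q t) + (M - Hf (p t)) ≤ 4 * (2 * M - Real.log E.card) := by
    by_contra hc
    push Not at hc
    have hx : ∃ x, law μ T x ≠ 0 := by
      by_contra hc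
      push Not at hc
      have := hlT.2
      simp [hc] at this
    obtain ⟨x, hx⟩ := hx
    have : ∑ t, law μ T t * (4 * (2 * M - Real.log E.card)) <
        ∑ t, law μ T t * (DD (p t) (q t) + (M - Hf (p t))) := by
      refine Finset.sum_lt_sum (fun g _ => ?_) ⟨x, Finset.mem_univ _, ?_⟩
      · by_cases hg : law μ T g = 0
        · simp [hg]
        · exact mul_le_mul_of_nonneg_left (hc g hg).le (hlT.1 g)
      · exact mul_lt_mul_of_pos_left (hc x hx) (lt_of_le_of_ne (hlT.1 x) hx.symm)
    rw [← Finset.sum_mul, hlT.2, one_mul] at this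
    linarith
  have hpt : IsP (p t) := cond_isP hμ Aa T t ht0
  have hqt : IsP (q t) := cond_isP hμ Bb T t ht0
  have hflat : ∀ g, law μ (fun ω => (Aa ω, T ω)) (g, t) = if (g, t.1 + g) ∈ E then (E.card : ℝ)⁻¹ else 0 := by
    intro g
    rw [law, Finset.sum_eq_single (g, t.1 + g)]
    · have : (Aa (g, t.1 + g), T (g, t.1 + g)) = (g, t) := by
        simp only [hT, hA, hB, hS]
        rw [add_comm t.1 g, g2_cancel]
      rw [if_pos this]
    · rintro ⟨a, b⟩ - hab
      rw [if_neg]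
      rintro h
      apply hab
      simp only [hT, hA, hB, hS, Prod.mk.injEq] at h
      obtain ⟨rfl, h2⟩ := h
      rw [← h2, add_comm (a + b), g2_cancel]
    · simp
  have hsupp : ∀ g, p t g ≠ 0 → g ∈ A := by
    intro g hg
    simp only [hp] at hg
    rw [hflat] at hg
    by_cases h : (g, t.1 + g) ∈ E
    · exact (hE _ h).1
    · simp [h] at hg
  have hHf := Hf_flat hpt (c := (E.card : ℝ)⁻¹ / law μ T t) (by
    intro g
    simp only [hp]
    rw [hflat]
    split_ifs <;> simp)
  have hcpos : 0 < (E.card : ℝ)⁻¹ / law μ T t :=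
    div_pos (inv_pos.2 hepos) (lt_of_le_of_ne (hlT.1 t) ht0.symm)
  have hle : Hf (p t) ≤ M := by
    have := HH_le_log hpt (fun g => g) A hsupp
    rwa [HH, law_id] at this
  have hD := DD_nonneg hpt hqt
  have htri := Hf_triangle hpt hqt hpt
  rw [conv_comm (q t) (p t)] at htri
  refine ⟨p t, hpt, hsupp, ?_, hle, ?_, ?_⟩
  · intro g
    rw [hHf, neg_neg, Real.exp_log hcpos]
    simp only [hp]
    rw [hflat]
    split_ifs
    · exact le_rfl
    · simpa using hcpos.le
  · unfold DD at *; linarith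
  · linarith

open scoped Classical in
/-- conclusion of BSG and PFR for sets with many additive triples -/
lemma bsg_pfr (A : Finset G) (E : Finset (G × G))
    (hE : ∀ t ∈ E, t.1 ∈ A ∧ t.2 ∈ A ∧ t.1 + t.2 ∈ A) (hne : E.Nonempty) :
    ∃ (H : Submodule (ZMod 2) G) (x : G),
      Real.log (Nat.card H) ≤ Real.log A.card + 1632 * (2 * Real.log A.card - Real.log E.card) ∧
      Real.exp (Real.log A.card - 1636 * (2 * Real.log A.card - Real.log E.card)) ≤
        ((A.filter fun g => g + x ∈ H).card : ℝ) := by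
  obtain ⟨q, hq, hs, hle, hM, hD, hd⟩ := bsg_sets A E hE hne
  obtain ⟨H, x, h1, h2⟩ := pfr hq
  refine ⟨H, x, by linarith, ?_⟩
  have h3 : ∑ g, (if g + x ∈ H then q g else 0) ≤
      ((A.filter fun g => g + x ∈ H).card : ℝ) * Real.exp (- Hf q) := by
    have : ∀ g, (if g + x ∈ H then q g else 0) ≤
        if g ∈ A.filter (fun g => g + x ∈ H) then Real.exp (- Hf q) else 0 := by
      intro g
      simp only [Finset.mem_filter]
      by_cases hg : g + x ∈ H
      · by_cases hA : g ∈ A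
        · simpa [hg, hA] using hle g
        · have : q g = 0 := by by_contra hc; exact hA (hs g hc)
          simp [hA, this]
      · simp [hg]
    refine (Finset.sum_le_sum fun g _ => this g).trans ?_
    rw [Finset.sum_ite_mem, Finset.univ_inter, Finset.sum_const, nsmul_eq_mul]
  have h4 := h2.trans h3
  have h5 := mul_le_mul_of_nonneg_right h4 (Real.exp_pos (Hf q)).le
  rw [mul_assoc, ← Real.exp_add, ← Real.exp_add, neg_add_cancel, Real.exp_zero, mul_one] at h5
  refine le_trans (Real.exp_le_exp.2 ?_) h5
  linarith
end bsgSets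

section quantumPart

/-- real sign character -/
noncomputable def sg (a : ZMod 2) : ℝ := (-1) ^ a.val

lemma sg_zero : sg 0 = 1 := by simp [sg]
lemma sg_one : sg 1 = -1 := by
  have : (1 : ZMod 2).val = 1 := rfl
  simp [sg, this]
lemma sg_add (a b : ZMod 2) : sg (a + b) = sg a * sg b := by
  have h : ∀ c : ZMod 2, c = 0 ∨ c = 1 := by decide
  have h2 : (1 : ZMod 2) + 1 = 0 := by decide
  rcases h a with rfl | rfl <;> rcases h b with rfl | rfl <;> simp [sg_zero, sg_one, h2]
lemma sg_ne {a : ZMod 2} (h : a ≠ 0) : sg a = -1 := by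
  have h' : ∀ c : ZMod 2, c = 0 ∨ c = 1 := by decide
  rcases h' a with rfl | rfl
  · exact absurd rfl h
  · exact sg_one
lemma sg_mul_self (a : ZMod 2) : sg a * sg a = 1 := by
  by_cases h : a = 0
  · simp [h, sg_zero]
  · simp [sg_ne h]

lemma sum_sg_zero {M : Type} [AddCommGroup M] [Fintype M] (φ : M → ZMod 2)
    (hφ : ∀ x y, φ (x + y) = φ x + φ y) (x0 : M) (h : φ x0 ≠ 0) : ∑ x, sg (φ x) = 0 := by
  have : ∑ x, sg (φ x) = ∑ x, sg (φ x) * sg (φ x0) := by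
    refine (Fintype.sum_equiv (Equiv.addRight x0) (fun x => sg (φ x) * sg (φ x0)) (fun x => sg (φ x)) fun x => ?_).symm
    simp only [Equiv.coe_addRight]
    rw [hφ, sg_add]
  rw [← Finset.sum_mul, sg_ne h] at this
  linarith

variable {n : ℕ}

/-- dot product -/
def dt (w x : Fin n → ZMod 2) : ZMod 2 := ∑ i, w i * x i

lemma dt_add_left (a b c : Fin n → ZMod 2) : dt (a + b) c = dt a c + dt b c := by
  simp [dt, add_mul, Finset.sum_add_distrib]
lemma dt_add_right (a b c : Fin n → ZMod 2) : dt a (b + c) = dt a b + dt a c := by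
  simp [dt, mul_add, Finset.sum_add_distrib]
lemma dt_comm (a b : Fin n → ZMod 2) : dt a b = dt b a := by
  simp [dt, mul_comm]

lemma sum_sg_dt (u : Fin n → ZMod 2) : ∑ w, sg (dt w u) = if u = 0 then (2:ℝ) ^ n else 0 := by
  split_ifs with h
  · subst h
    simp [dt, sg_zero]
  · obtain ⟨i, hi⟩ := Function.ne_iff.1 h
    refine sum_sg_zero (fun w => dt w u) (fun x y => dt_add_left _ _ _) (Pi.single i 1) ?_
    simpa [dt, Pi.single_apply] using hi

/-- amplitude of a Weyl operator -/
noncomputable def amp (f : (Fin n → ZMod 2) → ℂ) (x : (Fin n → ZMod 2) × (Fin n → ZMod 2)) : ℂ :=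
  ∑ y, f y * (starRingEnd ℂ) (f (y + x.1)) * (sg (dt x.2 y) : ℂ)

lemma charDist_eq (f : (Fin n → ZMod 2) → ℂ) (x) :
    charDist n f x = ((2:ℝ) ^ n)⁻¹ * ‖amp f x‖ ^ 2 := by
  simp only [charDist, amp, sg, dt]
  push_cast
  rfl

lemma sympl_eq (x y : (Fin n → ZMod 2) × (Fin n → ZMod 2)) : sympl n x y = dt x.1 y.2 + dt x.2 y.1 := rfl
lemma sympl_add_left (x y z : (Fin n → ZMod 2) × (Fin n → ZMod 2)) :
    sympl n (x + y) z = sympl n x z + sympl n y z := by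
  simp only [sympl_eq, Prod.fst_add, Prod.snd_add, dt_add_left]; ring
lemma sympl_add_right (x y z : (Fin n → ZMod 2) × (Fin n → ZMod 2)) :
    sympl n x (y + z) = sympl n x y + sympl n x z := by
  simp only [sympl_eq, Prod.fst_add, Prod.snd_add, dt_add_right]; ring
lemma sympl_comm (x y : (Fin n → ZMod 2) × (Fin n → ZMod 2)) : sympl n x y = sympl n y x := by
  simp only [sympl_eq]; rw [dt_comm x.1, dt_comm x.2, add_comm]
lemma sympl_self (x : (Fin n → ZMod 2) × (Fin n → ZMod 2)) : sympl n x x = 0 := by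
  rw [sympl_eq, dt_comm x.1]; exact ZModModule.add_self _

lemma amp_sq (f : (Fin n → ZMod 2) → ℂ) (x) : ((‖amp f x‖ ^ 2 : ℝ) : ℂ) =
    ∑ y, ∑ z, f y * (starRingEnd ℂ) (f (y + x.1)) * (starRingEnd ℂ) (f z) * f (z + x.1) *
      (sg (dt x.2 (y + z)) : ℂ) := by
  have : ((‖amp f x‖ ^ 2 : ℝ) : ℂ) = amp f x * (starRingEnd ℂ) (amp f x) := by
    rw [Complex.mul_conj']; push_cast; rfl
  rw [this, amp, map_sum, Finset.sum_mul_sum]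
  refine Finset.sum_congr rfl fun y _ => Finset.sum_congr rfl fun z _ => ?_
  simp only [map_mul, Complex.conj_conj, Complex.conj_ofReal, dt_add_right, sg_add, Complex.ofReal_mul]
  ring

lemma amp_sq' (f : (Fin n → ZMod 2) → ℂ) (x) : ((‖amp f x‖ ^ 2 : ℝ) : ℂ) =
    ∑ y, ∑ z, (f y * f z) * (starRingEnd ℂ) (f (y + x.1) * f (z + x.1)) *
      (sg (dt x.2 (y + z + x.1)) : ℂ) := by
  rw [amp_sq]
  refine Finset.sum_congr rfl fun y _ => ?_
  refine Fintype.sum_equiv (Equiv.addRight x.1) _ _ fun z => ?_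
  simp only [Equiv.coe_addRight, map_mul]
  rw [← add_assoc y z x.1, g2_cancel', g2_cancel']
  ring

lemma amp_dual (f : (Fin n → ZMod 2) → ℂ) (x) :
    (2:ℝ) ^ n * ‖amp f x‖ ^ 2 = ∑ y, sg (sympl n x y) * ‖amp f y‖ ^ 2 := by
  have : (((2:ℝ) ^ n * ‖amp f x‖ ^ 2 : ℝ) : ℂ) = ((∑ y, sg (sympl n x y) * ‖amp f y‖ ^ 2 : ℝ) : ℂ) := by
    rw [Complex.ofReal_sum]
    simp only [Complex.ofReal_mul, amp_sq]
    rw [Fintype.sum_prod_type]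
    have h1 : ∀ v' : Fin n → ZMod 2, ∑ w' : Fin n → ZMod 2, (sg (sympl n x (v', w')) : ℂ) *
        ∑ y, ∑ z, f y * (starRingEnd ℂ) (f (y + v')) * (starRingEnd ℂ) (f z) * f (z + v') *
          (sg (dt w' (y + z)) : ℂ) =
        ∑ y, f y * (starRingEnd ℂ) (f (y + v')) * (starRingEnd ℂ) (f (y + x.1)) * f (y + x.1 + v') *
          (sg (dt x.2 v') : ℂ) * (2:ℂ) ^ n := by
      intro v'
      simp only [Finset.mul_sum]
      rw [Finset.sum_comm]
      refine Finset.sum_congr rfl fun y _ => ?_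
      rw [Finset.sum_comm]
      have h2 : ∀ z, ∑ w' : Fin n → ZMod 2, (sg (sympl n x (v', w')) : ℂ) *
          (f y * (starRingEnd ℂ) (f (y + v')) * (starRingEnd ℂ) (f z) * f (z + v') * (sg (dt w' (y + z)) : ℂ)) =
          f y * (starRingEnd ℂ) (f (y + v')) * (starRingEnd ℂ) (f z) * f (z + v') * (sg (dt x.2 v') : ℂ) *
            ((∑ w', sg (dt w' (x.1 + (y + z))) : ℝ) : ℂ) := by
        intro z
        rw [Complex.ofReal_sum, Finset.mul_sum]
        refine Finset.sum_congr rfl fun w' _ => ?_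
        simp only [sympl_eq]
        rw [sg_add, dt_add_right w' x.1, sg_add, dt_comm x.1 w']
        push_cast
        ring
      simp only [h2, sum_sg_dt]
      rw [Finset.sum_eq_single (y + x.1)]
      · have : x.1 + (y + (y + x.1)) = 0 := by rw [g2_cancel, g2_self]
        rw [if_pos this]; push_cast; ring
      · intro z _ hz
        rw [if_neg]
        · simp
        · intro h
          apply hz
          rw [← add_assoc, g2_iff, zero_add] at h
          rw [h, add_comm]
      · simp
    rw [Finset.sum_congr rfl fun v' _ => h1 v']
    rw [Finset.mul_sum, Finset.sum_comm]
    refine Finset.sum_congr rfl fun y _ => ?_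
    rw [Finset.mul_sum]
    refine Fintype.sum_equiv (Equiv.addLeft y) _ _ fun z => ?_
    simp only [Equiv.coe_addLeft]
    have e1 : y + (y + z) = z := g2_cancel y z
    have e2 : y + x.1 + (y + z) = z + x.1 := by
      rw [add_add_add_comm, g2_self, zero_add, add_comm]
    rw [e1, e2]
    push_cast
    ring
  exact_mod_cast this

end quantumPart

section uncertaintyPart
variable {n : ℕ}

lemma amp_pair (f : (Fin n → ZMod 2) → ℂ) (x x' : (Fin n → ZMod 2) × (Fin n → ZMod 2)) :
    ∑ y, ∑ z, ((sg (dt x.2 (y + z + x.1)) : ℂ) * (f (y + x.1) * f (z + x.1))) *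
      (starRingEnd ℂ) ((sg (dt x'.2 (y + z + x'.1)) : ℂ) * (f (y + x'.1) * f (z + x'.1))) =
    ((sg (sympl n x x') * ‖amp f (x + x')‖ ^ 2 : ℝ) : ℂ) := by
  rw [Complex.ofReal_mul, amp_sq', Finset.mul_sum]
  refine Fintype.sum_equiv (Equiv.addRight x.1) _ _ fun y => ?_
  rw [Finset.mul_sum]
  refine Fintype.sum_equiv (Equiv.addRight x.1) _ _ fun z => ?_
  simp only [Equiv.coe_addRight, Prod.fst_add, Prod.snd_add]
  have e1 : ∀ a : Fin n → ZMod 2, a + x.1 + (x.1 + x'.1) = a + x'.1 := fun a => by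
    rw [add_assoc, g2_cancel]
  have e2 : y + x.1 + (z + x.1) + (x.1 + x'.1) = y + z + (x.1 + x'.1) := by
    rw [add_add_add_comm y, g2_self, add_zero]
  rw [e1, e1, e2]
  have e3 : sg (sympl n x x') * sg (dt (x.2 + x'.2) (y + z + (x.1 + x'.1))) =
      sg (dt x.2 (y + z + x.1)) * sg (dt x'.2 (y + z + x'.1)) := by
    rw [← sg_add, ← sg_add]
    congr 1
    have h2 : (2 : ZMod 2) = 0 := by decide
    simp only [sympl_eq, dt_add_left, dt_add_right]
    rw [dt_comm x.1 x'.2]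
    linear_combination (dt x'.2 x.1 + dt x.2 x'.1) * h2
  have e4 : ((sg (sympl n x x') : ℝ) : ℂ) * (sg (dt (x.2 + x'.2) (y + z + (x.1 + x'.1))) : ℂ) =
      (sg (dt x.2 (y + z + x.1)) : ℂ) * (sg (dt x'.2 (y + z + x'.1)) : ℂ) := by
    exact_mod_cast e3
  simp only [map_mul, Complex.conj_ofReal]
  linear_combination (-(f (y + x.1) * f (z + x.1) * (starRingEnd ℂ) (f (y + x'.1)) * (starRingEnd ℂ) (f (z + x'.1)))) * e4

open scoped Classical in
lemma uncertainty (f : (Fin n → ZMod 2) → ℂ) (hf : ∑ x, ‖f x‖ ^ 2 = 1)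
    (V : Submodule (ZMod 2) ((Fin n → ZMod 2) × (Fin n → ZMod 2))) :
    (∑ x : V, ‖amp f x‖ ^ 2) ^ 2 ≤ (Nat.card V : ℝ) *
      ∑ u : V, if ∀ y : V, sympl n y u = 0 then ‖amp f u‖ ^ 2 else 0 := by
  set K : (Fin n → ZMod 2) × (Fin n → ZMod 2) → ℂ := fun t =>
    ∑ x : V, (sg (dt x.1.2 (t.1 + t.2 + x.1.1)) : ℂ) * (f (t.1 + x.1.1) * f (t.2 + x.1.1)) with hK
  set F : (Fin n → ZMod 2) × (Fin n → ZMod 2) → ℂ := fun t => f t.1 * f t.2 with hF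
  have hS : ((∑ x : V, ‖amp f x‖ ^ 2 : ℝ) : ℂ) = ∑ t, F t * (starRingEnd ℂ) (K t) := by
    rw [Complex.ofReal_sum]
    simp only [hK, map_sum, Finset.mul_sum]
    rw [Finset.sum_comm]
    refine Finset.sum_congr rfl fun x _ => ?_
    rw [amp_sq', Fintype.sum_prod_type]
    refine Finset.sum_congr rfl fun y _ => Finset.sum_congr rfl fun z _ => ?_
    simp only [hF, map_mul, Complex.conj_ofReal]
    ring
  have hKn : ∑ t, ‖K t‖ ^ 2 = ∑ x : V, ∑ x' : V, sg (sympl n x x') * ‖amp f (x + x')‖ ^ 2 := by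
    have : ((∑ t, ‖K t‖ ^ 2 : ℝ) : ℂ) =
        ((∑ x : V, ∑ x' : V, sg (sympl n x x') * ‖amp f (x + x')‖ ^ 2 : ℝ) : ℂ) := by
      simp only [Complex.ofReal_sum]
      simp only [← amp_pair]
      have e : ∀ t, ((‖K t‖ ^ 2 : ℝ) : ℂ) = K t * (starRingEnd ℂ) (K t) := fun t => by
        rw [Complex.mul_conj']; push_cast; rfl
      simp only [e]
      simp only [hK, map_sum, Finset.sum_mul_sum]
      rw [Finset.sum_comm]
      refine Finset.sum_congr rfl fun x _ => ?_
      rw [Finset.sum_comm]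
      refine Finset.sum_congr rfl fun x' _ => ?_
      rw [Fintype.sum_prod_type]
    exact_mod_cast this
  have hKn2 : ∑ t, ‖K t‖ ^ 2 = (Nat.card V : ℝ) *
      ∑ u : V, if ∀ y : V, sympl n y u = 0 then ‖amp f u‖ ^ 2 else 0 := by
    rw [hKn]
    have e1 : ∀ x : V, ∑ x' : V, sg (sympl n x x') * ‖amp f (x + x')‖ ^ 2 =
        ∑ u : V, sg (sympl n x u) * ‖amp f u‖ ^ 2 := by
      intro x
      refine Fintype.sum_equiv (Equiv.addLeft x) _ _ fun x' => ?_
      simp only [Equiv.coe_addLeft, Submodule.coe_add]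
      rw [sympl_add_right, sympl_self, zero_add]
    rw [Finset.sum_congr rfl fun x _ => e1 x, Finset.sum_comm, Finset.mul_sum]
    refine Finset.sum_congr rfl fun u _ => ?_
    rw [← Finset.sum_mul]
    split_ifs with h
    · rw [Finset.sum_congr rfl fun x _ => by rw [h x, sg_zero]]
      simp [Nat.card_eq_fintype_card]
    · push Not at h
      obtain ⟨y, hy⟩ := h
      rw [sum_sg_zero (fun x : V => sympl n x u) (fun x y => by
        rw [Submodule.coe_add, sympl_add_left]) y hy]
      simp
  have hFn : ∑ t, ‖F t‖ ^ 2 = 1 := by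
    rw [Fintype.sum_prod_type]
    simp only [hF, norm_mul, mul_pow]
    rw [← Finset.sum_mul_sum, hf, one_mul]
  have hle : ∑ x : V, ‖amp f x‖ ^ 2 ≤ ∑ t, ‖F t‖ * ‖K t‖ := by
    have h0 : ‖((∑ x : V, ‖amp f x‖ ^ 2 : ℝ) : ℂ)‖ ≤ ∑ t, ‖F t‖ * ‖K t‖ := by
      rw [hS]
      refine (norm_sum_le _ _).trans (le_of_eq ?_)
      simp
    rw [Complex.norm_real] at h0
    exact (le_abs_self _).trans h0
  rw [← hKn2]
  calc (∑ x : V, ‖amp f x‖ ^ 2) ^ 2 ≤ (∑ t, ‖F t‖ * ‖K t‖) ^ 2 := by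
        gcongr
    _ ≤ (∑ t, ‖F t‖ ^ 2) * ∑ t, ‖K t‖ ^ 2 := Finset.sum_mul_sq_le_sq_mul_sq _ _ _
    _ = _ := by rw [hFn, one_mul]

lemma amp_le_one (f : (Fin n → ZMod 2) → ℂ) (hf : ∑ x, ‖f x‖ ^ 2 = 1) (x) : ‖amp f x‖ ≤ 1 := by
  have h1 : ‖amp f x‖ ≤ ∑ y, ‖f y‖ * ‖f (y + x.1)‖ := by
    refine (norm_sum_le _ _).trans (le_of_eq ?_)
    refine Finset.sum_congr rfl fun y _ => ?_
    have : ‖((sg (dt x.2 y) : ℝ) : ℂ)‖ = 1 := by simp [sg]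
    rw [norm_mul, this]; simp
  have h2 : ∑ y, ‖f (y + x.1)‖ ^ 2 = 1 := by
    rw [← hf]
    exact Fintype.sum_equiv (Equiv.addRight x.1) _ _ fun z => rfl
  have h3 := Finset.sum_mul_sq_le_sq_mul_sq Finset.univ (fun y => ‖f y‖) (fun y => ‖f (y + x.1)‖)
  rw [hf, h2] at h3
  have h4 : 0 ≤ ∑ y, ‖f y‖ * ‖f (y + x.1)‖ := Finset.sum_nonneg fun _ _ => by positivity
  nlinarith

lemma amp_zero (f : (Fin n → ZMod 2) → ℂ) (hf : ∑ x, ‖f x‖ ^ 2 = 1) : amp f 0 = 1 := by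
  have : ((∑ x, ‖f x‖ ^ 2 : ℝ) : ℂ) = 1 := by rw [hf]; simp
  rw [← this, amp, Complex.ofReal_sum]
  refine Finset.sum_congr rfl fun y _ => ?_
  have : dt (0 : Fin n → ZMod 2) y = 0 := by simp [dt]
  simp only [Prod.fst_zero, Prod.snd_zero, this, sg_zero, add_zero]
  rw [Complex.mul_conj']; push_cast; ring

/-- the symplectic form as a bilinear form -/
noncomputable def symplForm (n : ℕ) : LinearMap.BilinForm (ZMod 2) ((Fin n → ZMod 2) × (Fin n → ZMod 2)) :=
  LinearMap.mk₂ (ZMod 2) (sympl n) (fun x y z => sympl_add_left x y z)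
    (fun c x y => by
      simp only [sympl, Prod.smul_fst, Prod.smul_snd, Pi.smul_apply, smul_eq_mul, mul_add, Finset.mul_sum, mul_assoc])
    (fun x y z => sympl_add_right x y z)
    (fun c x y => by
      simp only [sympl, Prod.smul_fst, Prod.smul_snd, Pi.smul_apply, smul_eq_mul, mul_add, Finset.mul_sum, mul_left_comm])

lemma symplForm_apply (x y : (Fin n → ZMod 2) × (Fin n → ZMod 2)) : symplForm n x y = sympl n x y := rfl

lemma symplForm_ker : LinearMap.ker (symplForm n) = ⊥ := by
  rw [eq_bot_iff]
  intro x hx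
  rw [LinearMap.mem_ker] at hx
  have h : ∀ y, sympl n x y = 0 := fun y => by rw [← symplForm_apply, hx]; rfl
  rw [Submodule.mem_bot]
  ext i
  · have := h (0, Pi.single i 1)
    simpa [sympl, Pi.single_apply] using this
  · have := h (Pi.single i 1, 0)
    simpa [sympl, Pi.single_apply] using this

/-- isotropic subspaces extend to Lagrangian ones -/
lemma exists_lagrangian (R : Submodule (ZMod 2) ((Fin n → ZMod 2) × (Fin n → ZMod 2)))
    (hR : ∀ x ∈ R, ∀ y ∈ R, sympl n x y = 0) : ∃ L, IsLagrangian n L ∧ R ≤ L := by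
  have hfin : {L : Submodule (ZMod 2) ((Fin n → ZMod 2) × (Fin n → ZMod 2)) |
      ∀ x ∈ L, ∀ y ∈ L, sympl n x y = 0}.Finite := Set.toFinite _
  obtain ⟨L, hRL, hL⟩ := hfin.exists_le_maximal hR
  refine ⟨L, ⟨?_, hL.prop⟩, hRL⟩
  have horth : (symplForm n).orthogonal L = L := by
    apply le_antisymm
    · intro x hx
      rw [LinearMap.BilinForm.mem_orthogonal_iff] at hx
      have hx' : ∀ y ∈ L, sympl n y x = 0 := fun y hy => hx y hy
      have hiso : ∀ a ∈ L ⊔ Submodule.span (ZMod 2) {x}, ∀ b ∈ L ⊔ Submodule.span (ZMod 2) {x},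
          sympl n a b = 0 := by
        intro a ha b hb
        obtain ⟨a1, ha1, a2, ha2, rfl⟩ := Submodule.mem_sup.1 ha
        obtain ⟨b1, hb1, b2, hb2, rfl⟩ := Submodule.mem_sup.1 hb
        obtain ⟨s, rfl⟩ := Submodule.mem_span_singleton.1 ha2
        obtain ⟨t, rfl⟩ := Submodule.mem_span_singleton.1 hb2
        have e1 := hL.prop a1 ha1 b1 hb1
        have e2 := hx' a1 ha1
        have e3 := hx' b1 hb1
        rw [sympl_comm] at e3
        have e4 := sympl_self x
        rw [← symplForm_apply] at e1 e2 e3 e4 ⊢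
        simp only [map_add, map_smul, LinearMap.add_apply, LinearMap.smul_apply, e1, e2, e3, e4]
        simp
      have := hL.le_of_ge hiso le_sup_left
      exact this (Submodule.mem_sup_right (Submodule.mem_span_singleton_self x))
    · intro x hx
      rw [LinearMap.BilinForm.mem_orthogonal_iff]
      exact fun y hy => hL.prop y hy x hx
  have h := LinearMap.BilinForm.finrank_add_finrank_orthogonal' (B := symplForm n) L
  rw [horth, symplForm_ker, inf_bot_eq, finrank_bot] at h
  simp at h
  omega
end uncertaintyPart

section assemblePart

open scoped Classical in
lemma sum_submodule {M : Type} [AddCommGroup M] [Module (ZMod 2) M] [Fintype M]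
    (V : Submodule (ZMod 2) M) (F : M → ℝ) :
    ∑ u : V, F u = ∑ u ∈ univ.filter (fun u => u ∈ V), F u :=
  (Finset.sum_subtype (univ.filter (fun u => u ∈ V)) (by simp) F).symm

lemma card_sup_span_le {M : Type} [AddCommGroup M] [Module (ZMod 2) M] [Fintype M]
    (H : Submodule (ZMod 2) M) (x : M) :
    (Nat.card (H ⊔ Submodule.span (ZMod 2) {x} : Submodule (ZMod 2) M) : ℝ) ≤ 2 * Nat.card H := by
  have h : Nat.card (H ⊔ Submodule.span (ZMod 2) {x} : Submodule (ZMod 2) M) ≤ Nat.card (H × ZMod 2) := by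
    refine Nat.card_le_card_of_surjective (fun p : H × ZMod 2 =>
      (⟨p.1 + p.2 • x, Submodule.add_mem_sup p.1.2
        (Submodule.smul_mem _ _ (Submodule.mem_span_singleton_self x))⟩ :
        (H ⊔ Submodule.span (ZMod 2) {x} : Submodule (ZMod 2) M))) ?_
    rintro ⟨v, hv⟩
    obtain ⟨a1, ha1, a2, ha2, rfl⟩ := Submodule.mem_sup.1 hv
    obtain ⟨s, rfl⟩ := Submodule.mem_span_singleton.1 ha2
    exact ⟨(⟨a1, ha1⟩, s), rfl⟩
  rw [Nat.card_prod, Nat.card_zmod] at h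
  have : (Nat.card (H ⊔ Submodule.span (ZMod 2) {x} : Submodule (ZMod 2) M) : ℝ) ≤ ((Nat.card H * 2 : ℕ) : ℝ) := by
    exact_mod_cast h
  push_cast at this
  linarith

open scoped Classical in
/-- combinatorial part: functions with many additive triples correlate with a subspace -/
lemma exists_subspace {M : Type} [AddCommGroup M] [Module (ZMod 2) M] [Fintype M]
    (a : M → ℝ) (ha0 : ∀ x, 0 ≤ a x) (ha1 : ∀ x, a x ≤ 1) (N : ℝ) (hN : 0 < N) (hsum : ∑ x, a x = N)
    (γ : ℝ) (hγ : 0 < γ) (hγ1 : γ ≤ 1) (hT : γ ^ 2 * N ^ 2 ≤ ∑ x, ∑ y, a x * a y * a (x + y)) :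
    ∃ V : Submodule (ZMod 2) M,
      (γ ^ 4 / 36) * (γ / 2 * N) * (γ ^ 6 / 72) ^ 4904 / 2 * Nat.card V ≤ (∑ u : V, a u) ^ 2 := by
  set δ : ℝ := γ ^ 2 / 6 with hδ
  have hδ0 : 0 < δ := by positivity
  set A : Finset M := univ.filter (fun x => δ ≤ a x) with hA
  set E : Finset (M × M) := univ.filter (fun t => t.1 ∈ A ∧ t.2 ∈ A ∧ t.1 + t.2 ∈ A) with hE
  have hAc : δ * A.card ≤ N := by
    rw [← hsum]
    calc δ * A.card = ∑ x ∈ A, δ := by simp [mul_comm]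
      _ ≤ ∑ x ∈ A, a x := Finset.sum_le_sum fun x hx => (Finset.mem_filter.1 hx).2
      _ ≤ ∑ x, a x := Finset.sum_le_univ_sum_of_nonneg ha0
  have hpt : ∀ x y, a x * a y * a (x + y) ≤ (if (x, y) ∈ E then (1:ℝ) else 0) +
      δ * (a y * a (x + y)) + δ * (a x * a (x + y)) + δ * (a x * a y) := by
    intro x y
    have p1 := mul_nonneg (ha0 y) (ha0 (x + y))
    have p2 := mul_nonneg (ha0 x) (ha0 (x + y))
    have p3 := mul_nonneg (ha0 x) (ha0 y)
    have q1 := mul_nonneg hδ0.le p1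
    have q2 := mul_nonneg hδ0.le p2
    have q3 := mul_nonneg hδ0.le p3
    split_ifs with h
    · have : a x * a y * a (x + y) ≤ 1 := by
        have : a x * a y ≤ 1 := mul_le_one₀ (ha1 x) (ha0 y) (ha1 y)
        exact mul_le_one₀ this (ha0 _) (ha1 _)
      linarith
    · have h' : a x < δ ∨ a y < δ ∨ a (x + y) < δ := by
        by_contra hcon
        push Not at hcon
        exact h (by simp [hE, hA, hcon])
      rcases h' with h' | h' | h'
      · have := mul_le_mul_of_nonneg_right h'.le p1
        nlinarith
      · have := mul_le_mul_of_nonneg_right h'.le p2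
        nlinarith
      · have := mul_le_mul_of_nonneg_right h'.le p3
        nlinarith
  have hshift : ∀ x, ∑ y, a (x + y) = N := fun x => by
    rw [← hsum]; exact Fintype.sum_equiv (Equiv.addLeft x) _ _ fun _ => rfl
  have hshift' : ∀ y, ∑ x, a (x + y) = N := fun y => by
    rw [← hsum]; exact Fintype.sum_equiv (Equiv.addRight y) _ _ fun _ => rfl
  have s1 : ∑ x, ∑ y, a y * a (x + y) = N * N := by
    rw [Finset.sum_comm]
    simp only [← Finset.mul_sum, hshift', ← Finset.sum_mul, hsum]
  have s2 : ∑ x, ∑ y, a x * a (x + y) = N * N := by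
    simp only [← Finset.mul_sum, hshift, ← Finset.sum_mul, hsum]
  have s3 : ∑ x, ∑ y, a x * a y = N * N := by
    simp only [← Finset.mul_sum, ← Finset.sum_mul, hsum]
  have s0 : ∑ x, ∑ y, (if (x, y) ∈ E then (1:ℝ) else 0) = E.card := by
    rw [← Fintype.sum_prod_type' (f := fun x y => if (x, y) ∈ E then (1:ℝ) else 0)]
    simp
  have hEc : γ ^ 2 * N ^ 2 / 2 ≤ E.card := by
    have h : ∑ x, ∑ y, a x * a y * a (x + y) ≤ E.card + δ * (N * N) + δ * (N * N) + δ * (N * N) := by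
      calc _ ≤ ∑ x, ∑ y, ((if (x, y) ∈ E then (1:ℝ) else 0) +
            δ * (a y * a (x + y)) + δ * (a x * a (x + y)) + δ * (a x * a y)) :=
            Finset.sum_le_sum fun x _ => Finset.sum_le_sum fun y _ => hpt x y
        _ = _ := by
            simp only [Finset.sum_add_distrib, ← Finset.mul_sum]
            rw [s0]
            rw [s1]
            simp only [hshift, ← Finset.sum_mul, hsum]
    rw [hδ] at h
    nlinarith
  have hEpos : (0:ℝ) < E.card := lt_of_lt_of_le (by positivity) hEc
  have hEne : E.Nonempty := Finset.card_pos.1 (by exact_mod_cast hEpos)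
  have hEA : (E.card : ℝ) ≤ A.card ^ 2 := by
    have : E.card ≤ (A ×ˢ A).card := Finset.card_le_card fun t ht => by
      have := (Finset.mem_filter.1 ht).2
      exact Finset.mem_product.2 ⟨this.1, this.2.1⟩
    rw [Finset.card_product] at this
    rw [sq]; exact_mod_cast this
  have hApos : (0:ℝ) < A.card := by
    rcases (Nat.cast_nonneg (α := ℝ) A.card).lt_or_eq with h | h
    · exact h
    · rw [← h] at hEA; norm_num at hEA; exact absurd hEA hEne.ne_empty
  obtain ⟨H, x, hH, hx⟩ := bsg_pfr A E (fun t ht => (Finset.mem_filter.1 ht).2) hEne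
  set α := Real.log A.card with hα
  set e := Real.log E.card with he
  have expα : Real.exp α = A.card := Real.exp_log hApos
  have expe : Real.exp e = E.card := Real.exp_log hEpos
  set q := Real.exp (-(2 * α - e)) with hq
  have hq0 : 0 < q := Real.exp_pos _
  have hqE : q * (A.card : ℝ) ^ 2 = E.card := by
    rw [hq, ← expα, ← expe, ← Real.exp_nat_mul, ← Real.exp_add]; congr 1; push_cast; ring
  have hqγ : γ ^ 6 / 72 ≤ q := by
    have h1 : (δ * A.card) ^ 2 ≤ N ^ 2 := by gcongr
    have h2 : γ ^ 2 * (δ * A.card) ^ 2 / 2 ≤ q * (A.card : ℝ) ^ 2 := by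
      rw [hqE]; refine le_trans ?_ hEc; gcongr
    have h3 : (γ ^ 6 / 72) * (A.card : ℝ) ^ 2 ≤ q * (A.card : ℝ) ^ 2 := by
      refine le_trans (le_of_eq ?_) h2
      rw [hδ]; ring
    exact le_of_mul_le_mul_right h3 (by positivity)
  have hAN : γ / 2 * N ≤ A.card := by
    have h1 : (γ / 2 * N) ^ 2 ≤ (A.card : ℝ) ^ 2 := by
      refine le_trans ?_ (hEc.trans hEA)
      have : 0 ≤ γ ^ 2 * N ^ 2 := by positivity
      nlinarith
    exact le_of_sq_le_sq h1 hApos.le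
  have hHpos : (0:ℝ) < Nat.card H := by exact_mod_cast Nat.card_pos
  have hH' : (Nat.card H : ℝ) * q ^ 1632 ≤ A.card := by
    rw [← Real.exp_log hHpos, hq, ← Real.exp_nat_mul, ← Real.exp_add, ← expα]
    apply Real.exp_le_exp.2
    push_cast; linarith
  have hx' : (A.card : ℝ) * q ^ 1636 ≤ ((A.filter fun g => g + x ∈ H).card : ℝ) := by
    refine le_trans (le_of_eq ?_) hx
    rw [hq, ← Real.exp_nat_mul, ← expα, ← Real.exp_add]
    congr 1; push_cast; ring
  refine ⟨H ⊔ Submodule.span (ZMod 2) {x}, ?_⟩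
  have hV := card_sup_span_le H x
  set V := H ⊔ Submodule.span (ZMod 2) {x} with hVdef
  have hS : δ * (A.card * q ^ 1636) ≤ ∑ u : V, a u := by
    rw [sum_submodule V a]
    calc δ * (A.card * q ^ 1636) ≤ δ * ((A.filter fun g => g + x ∈ H).card : ℝ) := by gcongr
      _ = ∑ g ∈ A.filter (fun g => g + x ∈ H), δ := by simp [mul_comm]
      _ ≤ ∑ g ∈ A.filter (fun g => g + x ∈ H), a g :=
          Finset.sum_le_sum fun g hg => (Finset.mem_filter.1 (Finset.mem_filter.1 hg).1).2
      _ ≤ _ := by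
          refine Finset.sum_le_sum_of_subset_of_nonneg (fun g hg => ?_) (fun _ _ _ => ha0 _)
          have := (Finset.mem_filter.1 hg).2
          refine Finset.mem_filter.2 ⟨Finset.mem_univ _, ?_⟩
          have h2 : g = (g + x) + x := (g2_cancel' g x).symm
          rw [h2]
          exact Submodule.add_mem_sup this (Submodule.mem_span_singleton_self x)
  calc (γ ^ 4 / 36) * (γ / 2 * N) * (γ ^ 6 / 72) ^ 4904 / 2 * Nat.card V
      ≤ δ ^ 2 * A.card * q ^ 4904 / 2 * (2 * Nat.card H) := by
        have : γ ^ 4 / 36 = δ ^ 2 := by rw [hδ]; ring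
        rw [this]
        gcongr
    _ = δ ^ 2 * A.card * q ^ 3272 * (Nat.card H * q ^ 1632) := by
        rw [show (4904:ℕ) = 3272 + 1632 from rfl, pow_add]; ring
    _ ≤ δ ^ 2 * A.card * q ^ 3272 * A.card := by gcongr
    _ = (δ * (A.card * q ^ 1636)) ^ 2 := by
        rw [show (3272:ℕ) = 1636 * 2 from rfl, pow_mul]; ring
    _ ≤ _ := by gcongr

variable {n : ℕ}

lemma amp_sum (f : (Fin n → ZMod 2) → ℂ) (hf : ∑ x, ‖f x‖ ^ 2 = 1) :
    ∑ x, ‖amp f x‖ ^ 2 = (2:ℝ) ^ n := by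
  have h := amp_dual f 0
  rw [amp_zero f hf] at h
  have h0 : ∀ y, sympl n 0 y = 0 := fun y => by simp [sympl]
  simp only [h0, sg_zero, one_mul] at h
  rw [← h]; simp

lemma amp_cube (f : (Fin n → ZMod 2) → ℂ) :
    ∑ x, ∑ y, ‖amp f x‖ ^ 2 * ‖amp f y‖ ^ 2 * ‖amp f (x + y)‖ ^ 2 =
      (2:ℝ) ^ n * ∑ z, (‖amp f z‖ ^ 2) ^ 3 := by
  have hN : (0:ℝ) < 2 ^ n := by positivity
  apply mul_left_cancel₀ hN.ne'
  calc (2:ℝ) ^ n * ∑ x, ∑ y, ‖amp f x‖ ^ 2 * ‖amp f y‖ ^ 2 * ‖amp f (x + y)‖ ^ 2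
      = ∑ x, ∑ y, ∑ z, (sg (sympl n z x) * ‖amp f x‖ ^ 2) * (sg (sympl n z y) * ‖amp f y‖ ^ 2) * ‖amp f z‖ ^ 2 := by
        rw [Finset.mul_sum]
        refine Finset.sum_congr rfl fun x _ => ?_
        rw [Finset.mul_sum]
        refine Finset.sum_congr rfl fun y _ => ?_
        rw [mul_left_comm, amp_dual, Finset.mul_sum]
        refine Finset.sum_congr rfl fun z _ => ?_
        rw [sympl_add_left, sg_add, sympl_comm x, sympl_comm y]; ring
    _ = ∑ z, ∑ x, ∑ y, (sg (sympl n z x) * ‖amp f x‖ ^ 2) * (sg (sympl n z y) * ‖amp f y‖ ^ 2) * ‖amp f z‖ ^ 2 := by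
        rw [Finset.sum_comm]
        rw [Finset.sum_congr rfl fun y _ => Finset.sum_comm, Finset.sum_comm]
        exact Finset.sum_congr rfl fun z _ => Finset.sum_comm
    _ = _ := by
        rw [Finset.mul_sum, Finset.mul_sum]
        refine Finset.sum_congr rfl fun z _ => ?_
        simp only [← Finset.sum_mul]
        rw [← Finset.sum_mul_sum, ← amp_dual]; ring

open scoped Classical in
lemma main_bound (hn : 1 ≤ n) (γ : ℝ) (hγ : γ ∈ Set.Ioc (0 : ℝ) 1) (f : (Fin n → ZMod 2) → ℂ)
    (hf : ∑ x : Fin n → ZMod 2, ‖f x‖ ^ 2 = 1)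
    (hG : (2 : ℝ) ^ n * (∑ x : (Fin n → ZMod 2) × (Fin n → ZMod 2), (charDist n f x) ^ 2) ≥ γ) :
    ∃ L : Submodule (ZMod 2) ((Fin n → ZMod 2) × (Fin n → ZMod 2)), IsLagrangian n L ∧
      (γ ^ 4 / 36) * (γ / 2) * (γ ^ 6 / 72) ^ 4904 / 2 ≤
        ∑ x : L, charDist n f (x : (Fin n → ZMod 2) × (Fin n → ZMod 2)) := by
  have hN : (0:ℝ) < 2 ^ n := by positivity
  have hsum := amp_sum f hf
  have h2 : γ * 2 ^ n ≤ ∑ x, (‖amp f x‖ ^ 2) ^ 2 := by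
    have : (2 : ℝ) ^ n * (∑ x : (Fin n → ZMod 2) × (Fin n → ZMod 2), (charDist n f x) ^ 2) =
        ((2:ℝ) ^ n)⁻¹ * ∑ x, (‖amp f x‖ ^ 2) ^ 2 := by
      simp only [charDist_eq, mul_pow, ← Finset.mul_sum]
      field_simp
    rw [this, ge_iff_le, ← div_eq_inv_mul, le_div_iff₀ hN] at hG
    exact hG
  have h3 : (∑ x, (‖amp f x‖ ^ 2) ^ 2) ^ 2 ≤ (2:ℝ) ^ n * ∑ x, (‖amp f x‖ ^ 2) ^ 3 := by
    have := Finset.sum_mul_sq_le_sq_mul_sq Finset.univ (fun x => ‖amp f x‖) (fun x => ‖amp f x‖ ^ 3)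
    rw [hsum] at this
    calc _ = (∑ x, ‖amp f x‖ * ‖amp f x‖ ^ 3) ^ 2 := by
          congr 1; exact Finset.sum_congr rfl fun x _ => by ring
      _ ≤ _ := this
      _ = _ := by congr 1; exact Finset.sum_congr rfl fun x _ => by ring
  have hT : γ ^ 2 * ((2:ℝ) ^ n) ^ 2 ≤ ∑ x, ∑ y, ‖amp f x‖ ^ 2 * ‖amp f y‖ ^ 2 * ‖amp f (x + y)‖ ^ 2 := by
    rw [amp_cube, ← mul_pow]
    refine le_trans ?_ h3
    have := hγ.1
    gcongr
  obtain ⟨V, hV⟩ := exists_subspace (fun x => ‖amp f x‖ ^ 2) (fun x => by positivity)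
    (fun x => pow_le_one₀ (norm_nonneg _) (amp_le_one f hf x)) _ hN hsum γ hγ.1 hγ.2 hT
  have hU := hV.trans (uncertainty f hf V)
  have hVpos : (0:ℝ) < Nat.card V := by exact_mod_cast Nat.card_pos
  rw [mul_comm (Nat.card V : ℝ)] at hU
  have hU' := le_of_mul_le_mul_right hU hVpos
  obtain ⟨L, hL, hRL⟩ := exists_lagrangian (V ⊓ (symplForm n).orthogonal V) (by
    intro x hx y hy
    exact LinearMap.BilinForm.mem_orthogonal_iff.1 hy.2 x hx.1)
  refine ⟨L, hL, ?_⟩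
  have hle : (∑ u : V, if ∀ y : V, sympl n y u = 0 then ‖amp f u‖ ^ 2 else 0) ≤ ∑ u : L, ‖amp f u‖ ^ 2 := by
    rw [sum_submodule V (fun u => if ∀ y : V, sympl n y u = 0 then ‖amp f u‖ ^ 2 else 0),
      sum_submodule L (fun u => ‖amp f u‖ ^ 2), ← Finset.sum_filter]
    refine Finset.sum_le_sum_of_subset_of_nonneg (fun u hu => ?_) (fun _ _ _ => by positivity)
    simp only [Finset.mem_filter, Finset.mem_univ, true_and] at hu ⊢
    exact hRL ⟨hu.1, LinearMap.BilinForm.mem_orthogonal_iff.2 fun y hy => hu.2 ⟨y, hy⟩⟩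
  simp only [charDist_eq, ← Finset.mul_sum]
  rw [← div_eq_inv_mul, le_div_iff₀ hN]
  refine le_trans (le_of_eq ?_) (hU'.trans hle)
  ring

end assemblePart

open scoped Classical in
/-- inverse theorem for the Gowers-3 norm of quantum states. -/
theorem stmt_14 :
    ∃ c : ℝ, 0 < c ∧ ∃ C : ℝ, 1 ≤ C ∧
      ∀ n : ℕ, 1 ≤ n → ∀ γ : ℝ, γ ∈ Set.Ioc (0 : ℝ) 1 →
        ∀ f : (Fin n → ZMod 2) → ℂ, (∑ x : Fin n → ZMod 2, ‖f x‖ ^ 2 = 1) →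
          (2 : ℝ) ^ n * (∑ x : (Fin n → ZMod 2) × (Fin n → ZMod 2),
              (charDist n f x) ^ 2) ≥ γ →
          ∃ L : Submodule (ZMod 2) ((Fin n → ZMod 2) × (Fin n → ZMod 2)),
            IsLagrangian n L ∧
            c * γ ^ C ≤
              ∑ x : L, charDist n f (x : (Fin n → ZMod 2) × (Fin n → ZMod 2)) := by
  have key : ∃ k : ℕ, ∀ γ : ℝ, (γ ^ 4 / 36) * (γ / 2) * (γ ^ 6 / 72) ^ 4904 / 2 =
      (144 * 72 ^ k)⁻¹ * γ ^ (5 + 6 * k) := by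
    have gen : ∀ (k : ℕ) (γ : ℝ), (γ ^ 4 / 36) * (γ / 2) * (γ ^ 6 / 72) ^ k / 2 =
      (144 * 72 ^ k)⁻¹ * γ ^ (5 + 6 * k) := by
      intro k γ
      rw [div_pow, pow_add, pow_mul, mul_inv]
      ring
    exact ⟨4904, gen 4904⟩
  obtain ⟨k, hk⟩ := key
  refine ⟨(144 * 72 ^ k)⁻¹, by positivity, ((5 + 6 * k : ℕ) : ℝ), ?_, ?_⟩
  · exact_mod_cast (by omega : 1 ≤ 5 + 6 * k)
  · intro n hn γ hγ f hf hG
    obtain ⟨L, hL, hb⟩ := main_bound hn γ hγ f hf hG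
    refine ⟨L, hL, ?_⟩
    rw [Real.rpow_natCast, ← hk]
    exact hb
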